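/- Assume the SOSC holds with respect to J. Fix a > 1, ε₀ > 0, and set b := max(2a, diam(J)/ε₀). Then for ν-almost every w ∈ W, writing x = π(w), the limit lim_{δ→0⁺} (1/ln(1/δ)) ∫_δ^{d(x,ℝ^d∖J)/b} ε^{−(d−1)} H^{d−1}(∂F(ε) ∩ B(x,aε)) ε^{−1} dε exists, is finite, is independent of w, and equals (∑_{j=1}^N r_j^D ln(1/r_j))^{−1} · ∫_W ∫_{d(π(v),ℝ^d∖S_{v₁}(J))/b}^{d(π(v),ℝ^d∖J)/b} ε^{−(d−1)} H^{d−1}(∂F(ε) ∩ B(π(v),aε)) ε^{−1} dε dν(v), where ∂F(ε) denotes the topological boundary of the parallel set F(ε) and H^{d−1} is (d−1)-dimensional Hausdorff measure. -/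

import Mathlib

open MeasureTheory Metric Filter Set
open scoped ENNReal Topology
open scoped NNReal

/-!
For `x = π(w)` and `ε ≤ d(x, (S_{w₀} J)ᶜ) / b` the ball `B(x, aε)` only sees the piece `S_{w₀} F`
of `F`, because by the open set condition the other pieces stay away from `S_{w₀}(int J)`. Hence
the density at `(x, ε)` equals the density at `(π(shift w), ε / r_{w₀})`, and the integral down to
the `n`-th scale `r_{w₀} ⋯ r_{wₙ₋₁} d(π(shiftⁿ w), Jᶜ) / b` is the Birkhoff sum of the integral over
the window between two consecutive scales. The logarithm of the `n`-th scale is, up to sign and a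
constant, also a Birkhoff sum; its summand is cohomologous to `log (1 / r_{w₀})`. Birkhoff's ergodic
theorem for the Bernoulli shift gives the limit along the scales, and monotonicity in `δ` fills the
gaps between them.

Two integrability facts make this work. The density is bounded: every point of `∂F(ε)` lies on a
ball of radius `ε` contained in `F(ε)`, which makes pieces of `∂F(ε)` Lipschitz graphs of
controlled number and size. And `log d(π(w), Jᶜ)` is integrable: the strong open set condition
provides a cylinder on which `d(π(·), Jᶜ)` is bounded below, and its return times are geometric.
-/

section HausdorffSlices

theorem exists_pos_add_two_mul_rpow_le {s : ℝ} (hs : 0 ≤ s) {D r η : ℝ≥0∞} (hr : D < r)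
    (hη : η ≠ 0) : ∃ δ : ℝ≥0, 0 < δ ∧ D + 2 * δ ≤ r ∧ (D + 2 * δ) ^ s ≤ D ^ s + η := by
  have hlim : Tendsto (fun δ : ℝ≥0 => D + 2 * (δ : ℝ≥0∞)) (𝓝[>] 0) (𝓝 D) := by
    have hcont : Continuous fun δ : ℝ≥0 => D + 2 * (δ : ℝ≥0∞) :=
      continuous_const.add ((ENNReal.continuous_const_mul (by simp)).comp ENNReal.continuous_coe)
    simpa using (hcont.tendsto 0).mono_left nhdsWithin_le_nhds
  have hlt : D ^ s < D ^ s + η :=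
    ENNReal.lt_add_right (ENNReal.rpow_ne_top_of_nonneg hs hr.ne_top) hη
  have hpow := (ENNReal.continuous_rpow_const (y := s)).continuousAt.tendsto.comp hlim
  obtain ⟨δ, ⟨hδr, hδη⟩, hδ⟩ := (((hlim.eventually_lt_const hr).and
    (hpow.eventually_lt_const hlt)).and self_mem_nhdsWithin).exists
  exact ⟨δ, hδ, hδr.le, hδη.le⟩

theorem exists_isOpen_superset_tsum_ediam_rpow_lt {E : Type*} [PseudoEMetricSpace E] {s : ℝ}
    (hs : 0 ≤ s) {t : ℕ → Set E} {c r : ℝ≥0∞} (ht : ∀ k, ediam (t k) < r)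
    (hc : ∑' k, ⨆ _ : (t k).Nonempty, ediam (t k) ^ s < c) :
    ∃ t' : ℕ → Set E, (∀ k, IsOpen (t' k)) ∧ (∀ k, t k ⊆ t' k) ∧ (∀ k, ediam (t' k) ≤ r) ∧
      ∑' k, ⨆ _ : (t' k).Nonempty, ediam (t' k) ^ s < c := by
  obtain ⟨η, hη, hη_sum⟩ := ENNReal.exists_pos_sum_of_countable' (tsub_pos_of_lt hc).ne' ℕ
  choose δ hδ hδr hδη using fun k => exists_pos_add_two_mul_rpow_le hs (ht k) (hη k).ne'
  refine ⟨fun k => thickening (δ k) (t k), fun k => isOpen_thickening,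
    fun k => self_subset_thickening (NNReal.coe_pos.2 (hδ k)) _,
    fun k => (ediam_thickening_le _).trans (hδr k), ?_⟩
  calc ∑' k, ⨆ _ : (thickening (δ k) (t k)).Nonempty, ediam (thickening (δ k) (t k)) ^ s
      ≤ ∑' k, ((⨆ _ : (t k).Nonempty, ediam (t k) ^ s) + η k) := by
        refine ENNReal.tsum_le_tsum fun k => iSup_le fun hne => ?_
        have hne' : (t k).Nonempty := by
          by_contra hempty
          simp [not_nonempty_iff_eq_empty.1 hempty] at hne
        simp only [hne', ciSup_pos]
        exact (ENNReal.rpow_le_rpow (ediam_thickening_le _) hs).trans (hδη k)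
    _ = (∑' k, ⨆ _ : (t k).Nonempty, ediam (t k) ^ s) + ∑' k, η k := ENNReal.tsum_add
    _ < c := lt_tsub_iff_left.1 hη_sum

theorem hausdorffMeasure_le_iff_exists_isOpen_cover {E : Type*} [EMetricSpace E]
    [MeasurableSpace E] [BorelSpace E] {s : ℝ} (hs : 0 ≤ s) {c : ℝ≥0∞} (hc : c ≠ ⊤)
    {u : ℕ → ℝ≥0∞} (hu_pos : ∀ n, 0 < u n) (hu : Tendsto u atTop (𝓝 0)) (A : Set E) :
    μH[s] A ≤ c ↔ ∀ n, ∃ t : ℕ → Set E, ((∀ k, IsOpen (t k)) ∧ (∀ k, ediam (t k) ≤ u n) ∧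
      ∑' k, ⨆ _ : (t k).Nonempty, ediam (t k) ^ s < c + u n) ∧ A ⊆ ⋃ k, t k := by
  rw [Measure.hausdorffMeasure_apply]
  constructor
  · intro h n
    obtain ⟨ρ, hρ, hρu⟩ := exists_between (hu_pos n)
    have hlt := ((iSup₂_le_iff.1 h) ρ hρ).trans_lt (ENNReal.lt_add_right hc (hu_pos n).ne')
    simp only [iInf_lt_iff] at hlt
    obtain ⟨t, htA, htd, hts⟩ := hlt
    obtain ⟨t', ht'o, htt', ht'd, ht's⟩ :=
      exists_isOpen_superset_tsum_ediam_rpow_lt hs (fun k => (htd k).trans_lt hρu) hts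
    exact ⟨t', ⟨ht'o, ht'd, ht's⟩, htA.trans (iUnion_mono htt')⟩
  · refine fun h => iSup₂_le fun ρ hρ => ge_of_tendsto (x := atTop)
      (f := fun n => c + u n) (by simpa using hu.const_add c) ?_
    filter_upwards [hu.eventually_lt_const hρ] with n hn
    obtain ⟨t, ⟨-, htd, hts⟩, htA⟩ := h n
    exact (iInf₂_le_of_le t htA (iInf_le _ fun k => (htd k).trans hn.le)).trans hts.le

theorem isOpen_setOf_slice_subset {P E : Type*} [TopologicalSpace P] [TopologicalSpace E]
    {C : Set (P × E)} (hC : IsClosed C) {K U : Set E} (hK : IsCompact K) (hU : IsOpen U) :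
    IsOpen {p | {y | y ∈ K ∧ (p, y) ∈ C} ⊆ U} := by
  refine isOpen_iff_mem_nhds.2 fun p hp => ?_
  have hev : ∀ᶠ q in 𝓝 p, ∀ y ∈ K, (q, y) ∈ Cᶜ ∪ Prod.snd ⁻¹' U := by
    refine hK.eventually_forall_of_forall_eventually fun y hy =>
      (hC.isOpen_compl.union (hU.preimage continuous_snd)).mem_nhds ?_
    exact or_iff_not_imp_left.2 fun hyC => hp ⟨hy, not_not.1 hyC⟩
  filter_upwards [hev] with q hq y hy
  exact (hq y hy.1).resolve_left (not_not.2 hy.2)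

variable {P E : Type*} [TopologicalSpace P] [MeasurableSpace P] [OpensMeasurableSpace P]
  [EMetricSpace E] [MeasurableSpace E] [BorelSpace E] {s : ℝ} {C : Set (P × E)}

theorem measurable_hausdorffMeasure_slice_of_isCompact (hs : 0 ≤ s) (hC : IsClosed C) {K : Set E}
    (hK : IsCompact K) : Measurable fun p => μH[s] {y | y ∈ K ∧ (p, y) ∈ C} := by
  refine measurable_of_Iic fun c => ?_
  obtain rfl | hc := eq_or_ne c ⊤
  · simp
  have hpre : (fun p => μH[s] {y | y ∈ K ∧ (p, y) ∈ C}) ⁻¹' Iic c =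
      ⋂ n : ℕ, ⋃ t ∈ {t : ℕ → Set E | (∀ k, IsOpen (t k)) ∧ (∀ k, ediam (t k) ≤ (n : ℝ≥0∞)⁻¹) ∧
        ∑' k, ⨆ _ : (t k).Nonempty, ediam (t k) ^ s < c + (n : ℝ≥0∞)⁻¹},
        {p | {y | y ∈ K ∧ (p, y) ∈ C} ⊆ ⋃ k, t k} := by
    ext p
    rw [mem_preimage, mem_Iic, hausdorffMeasure_le_iff_exists_isOpen_cover hs hc (by simp)
      ENNReal.tendsto_inv_nat_nhds_zero]
    simp only [mem_iInter, mem_iUnion, mem_ofPred_eq, exists_prop]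
  rw [hpre]
  exact MeasurableSet.iInter fun n => (isOpen_biUnion fun t ht =>
    isOpen_setOf_slice_subset hC hK (isOpen_iUnion ht.1)).measurableSet

theorem measurable_hausdorffMeasure_slice [SigmaCompactSpace E] (hs : 0 ≤ s) (hC : IsClosed C) :
    Measurable fun p => μH[s] {y | (p, y) ∈ C} := by
  have hsup : (fun p => μH[s] {y | (p, y) ∈ C}) =
      fun p => ⨆ n, μH[s] {y | y ∈ compactCovering E n ∧ (p, y) ∈ C} := by
    ext p
    have hmono : Monotone fun n => {y | y ∈ compactCovering E n ∧ (p, y) ∈ C} :=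
      fun m n hmn y hy => ⟨compactCovering_subset E hmn hy.1, hy.2⟩
    rw [← hmono.measure_iUnion]
    congr 1
    ext y
    simpa using fun _ => exists_mem_compactCovering y
  rw [hsup]
  exact Measurable.iSup fun n =>
    measurable_hausdorffMeasure_slice_of_isCompact hs hC (isCompact_compactCovering E n)

end HausdorffSlices

section SurfaceBound

theorem hausdorffMeasure_le_of_antilipschitzWith_domRestrict {X Y : Type*} [EMetricSpace X]
    [MeasurableSpace X] [BorelSpace X] [EMetricSpace Y] [MeasurableSpace Y] [BorelSpace Y]
    {Q : X → Y} {M : Set X} {K : ℝ≥0} {s : ℝ} (hs : 0 ≤ s)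
    (hQ : AntilipschitzWith K (M.domRestrict Q)) : μH[s] M ≤ (K : ℝ≥0∞) ^ s * μH[s] (Q '' M) := by
  calc μH[s] M = μH[s] (univ : Set M) := by
        rw [← (isometry_subtype_coe (s := M)).hausdorffMeasure_image (Or.inl hs), image_univ,
          Subtype.range_coe]
    _ ≤ (K : ℝ≥0∞) ^ s * μH[s] (M.domRestrict Q '' univ) := hQ.le_hausdorffMeasure_image hs univ
    _ = (K : ℝ≥0∞) ^ s * μH[s] (Q '' M) := by rw [image_univ, range_domRestrict]

/-- Every point of `M` lies on a unit sphere with centre in `A` whose open ball misses `M`. Level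
sets of distance functions have this property after rescaling. -/
def HasExteriorUnitBalls {X : Type*} [PseudoMetricSpace X] (A M : Set X) : Prop :=
  ∀ y ∈ M, ∃ p ∈ A, dist y p = 1 ∧ ∀ z ∈ M, 1 ≤ dist z p

theorem HasExteriorUnitBalls.mono {X : Type*} [PseudoMetricSpace X] {A M M' : Set X}
    (hM : HasExteriorUnitBalls A M) (h : M' ⊆ M) : HasExteriorUnitBalls A M' := fun y hy =>
  let ⟨p, hp, hyp, hMp⟩ := hM y (h hy)
  ⟨p, hp, hyp, fun z hz => hMp z (h hz)⟩

variable {E : Type*} [NormedAddCommGroup E] [InnerProductSpace ℝ E]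

theorem norm_le_two_mul_norm_orthogonalProjectionOnto {u v : E} (hu : ‖u‖ = 1)
    (huv : |inner ℝ u v| ≤ ‖v‖ / 4) :
    ‖v‖ ≤ 2 * ‖(ℝ ∙ u)ᗮ.orthogonalProjectionOnto v‖ := by
  have hpyth := Submodule.norm_sq_eq_add_norm_sq_projection v (ℝ ∙ u)
  have hline : ‖(ℝ ∙ u).orthogonalProjectionOnto v‖ = |inner ℝ u v| := by
    rw [← Submodule.norm_coe, ← Submodule.starProjection_apply,
      Submodule.starProjection_unit_singleton ℝ hu, norm_smul, hu, mul_one, Real.norm_eq_abs]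
  rw [hline] at hpyth
  have hsq : |inner ℝ u v| ^ 2 ≤ (‖v‖ / 4) ^ 2 := by gcongr
  refine (sq_le_sq₀ (by positivity) (by positivity)).1 ?_
  nlinarith [sq_nonneg ‖v‖]

theorem neg_norm_sub_sq_div_two_le_inner {y z p : E} (h : ‖z - p‖ ≤ ‖y - p‖) :
    -(‖y - z‖ ^ 2 / 2) ≤ inner ℝ (z - p) (y - z) := by
  have hsq : ‖z - p‖ ^ 2 ≤ ‖y - p‖ ^ 2 := by gcongr
  rw [← sub_add_sub_cancel y z p, norm_add_sq_real, real_inner_comm] at hsq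
  linarith

theorem neg_norm_sub_div_four_le_inner {u y z p : E} (hyz : ‖y - z‖ ≤ 1 / 10)
    (hu : ‖u - (z - p)‖ ≤ 1 / 5) (hp : ‖z - p‖ ≤ ‖y - p‖) :
    -(‖y - z‖ / 4) ≤ inner ℝ u (y - z) := by
  have hball := neg_norm_sub_sq_div_two_le_inner hp
  have hdiff : |inner ℝ (u - (z - p)) (y - z)| ≤ 1 / 5 * ‖y - z‖ :=
    (abs_real_inner_le_norm _ _).trans (by gcongr)
  rw [inner_sub_left] at hdiff
  nlinarith [(abs_le.1 hdiff).1, norm_nonneg (y - z)]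

theorem HasExteriorUnitBalls.abs_inner_le {M : Set E} {y₀ p₀ : E}
    (hM : HasExteriorUnitBalls (closedBall p₀ (1 / 20)) M) (hMy₀ : M ⊆ closedBall y₀ (1 / 20))
    {y₁ p₁ : E} (hy₁ : y₁ ∈ M) (hp₁ : p₁ ∈ closedBall p₀ (1 / 20)) {y z : E} (hy : y ∈ M)
    (hz : z ∈ M) : |inner ℝ (y₁ - p₁) (y - z)| ≤ ‖y - z‖ / 4 := by
  have lower : ∀ y ∈ M, ∀ z ∈ M, -(‖y - z‖ / 4) ≤ inner ℝ (y₁ - p₁) (y - z) := by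
    intro y hy z hz
    obtain ⟨p, hp, hzp, hMp⟩ := hM z hz
    refine neg_norm_sub_div_four_le_inner (p := p) ?_ ?_ ?_
    · rw [← dist_eq_norm]
      linarith [dist_triangle_right y z y₀, mem_closedBall.1 (hMy₀ hy), mem_closedBall.1 (hMy₀ hz)]
    · rw [sub_sub_sub_comm]
      refine (norm_sub_le _ _).trans ?_
      rw [← dist_eq_norm, ← dist_eq_norm]
      linarith [dist_triangle_right y₁ z y₀, dist_triangle_right p₁ p p₀, mem_closedBall.1 hp₁,
        mem_closedBall.1 hp, mem_closedBall.1 (hMy₀ hy₁), mem_closedBall.1 (hMy₀ hz)]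
    · rw [← dist_eq_norm, ← dist_eq_norm, hzp]
      exact hMp y hy
  refine abs_le.2 ⟨lower y hy z hz, ?_⟩
  have := lower z hz y hy
  rw [← neg_sub y z, inner_neg_right, norm_neg] at this
  linarith

variable {n : ℕ} [Fact (Module.finrank ℝ E = n + 1)]

theorem exists_lipschitzWith_one_dist_le_two_mul {u : E} (hu : ‖u‖ = 1) :
    ∃ Q : E → EuclideanSpace ℝ (Fin n), LipschitzWith 1 Q ∧
      ∀ y z, |inner ℝ u (y - z)| ≤ ‖y - z‖ / 4 → dist y z ≤ 2 * dist (Q y) (Q z) := by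
  have hu_ne : u ≠ 0 := norm_ne_zero_iff.1 (hu ▸ one_ne_zero)
  let coords := (OrthonormalBasis.fromOrthogonalSpanSingleton (𝕜 := ℝ) n hu_ne).repr
  let Q : E → EuclideanSpace ℝ (Fin n) := fun y => coords ((ℝ ∙ u)ᗮ.orthogonalProjectionOnto y)
  have hQ : ∀ y z, dist (Q y) (Q z) = ‖(ℝ ∙ u)ᗮ.orthogonalProjectionOnto (y - z)‖ := fun y z => by
    rw [coords.dist_map, dist_eq_norm, map_sub]
  refine ⟨Q, LipschitzWith.of_dist_le_mul fun y z => ?_, fun y z hyz => ?_⟩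
  · rw [hQ, dist_eq_norm, NNReal.coe_one, one_mul]
    exact (ℝ ∙ u)ᗮ.norm_orthogonalProjectionOnto_apply_le (y - z)
  · rw [hQ, dist_eq_norm]
    exact norm_le_two_mul_norm_orthogonalProjectionOnto hu hyz

variable [MeasurableSpace E] [BorelSpace E]

theorem HasExteriorUnitBalls.hausdorffMeasure_le_of_subset {M : Set E} {y₀ p₀ : E}
    (hM : HasExteriorUnitBalls (closedBall p₀ (1 / 20)) M) (hMy₀ : M ⊆ closedBall y₀ (1 / 20)) :
    μH[n] M ≤ 2 ^ (n : ℝ) * μH[n] (closedBall (0 : EuclideanSpace ℝ (Fin n)) 1) := by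
  obtain rfl | ⟨y₁, hy₁⟩ := M.eq_empty_or_nonempty
  · simp
  obtain ⟨p₁, hp₁, hyp₁, -⟩ := hM y₁ hy₁
  obtain ⟨Q, hQ_lip, hQ_anti⟩ := exists_lipschitzWith_one_dist_le_two_mul (n := n)
    (dist_eq_norm y₁ p₁ ▸ hyp₁)
  have hQ_antilip : AntilipschitzWith 2 (M.domRestrict Q) := AntilipschitzWith.of_le_mul_dist
    fun y z => hQ_anti y z (hM.abs_inner_le hMy₀ hy₁ hp₁ y.2 z.2)
  have himage : Q '' M ⊆ closedBall (Q y₁) 1 := by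
    rintro _ ⟨y, hy, rfl⟩
    have hlip := hQ_lip.dist_le_mul y y₁
    rw [NNReal.coe_one, one_mul] at hlip
    rw [mem_closedBall]
    linarith [dist_triangle_right y y₁ y₀, mem_closedBall.1 (hMy₀ hy), mem_closedBall.1 (hMy₀ hy₁)]
  have : (μH[n] : Measure (EuclideanSpace ℝ (Fin n))).IsAddHaarMeasure := by
    simpa using isAddHaarMeasure_hausdorffMeasure (E := EuclideanSpace ℝ (Fin n))
  calc μH[n] M ≤ 2 ^ (n : ℝ) * μH[n] (Q '' M) :=
      hausdorffMeasure_le_of_antilipschitzWith_domRestrict n.cast_nonneg hQ_antilip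
    _ ≤ 2 ^ (n : ℝ) * μH[n] (closedBall (Q y₁) 1) := by gcongr
    _ = 2 ^ (n : ℝ) * μH[n] (closedBall (0 : EuclideanSpace ℝ (Fin n)) 1) := by
      rw [Measure.addHaar_closedBall_center]

theorem HasExteriorUnitBalls.exists_hausdorffMeasure_le (R : ℝ) :
    ∃ C : ℝ≥0, ∀ M : Set E, M ⊆ closedBall 0 R → HasExteriorUnitBalls univ M → μH[n] M ≤ C := by
  have : FiniteDimensional ℝ E := .of_fact_finrank_eq_succ n
  have : (μH[n] : Measure (EuclideanSpace ℝ (Fin n))).IsAddHaarMeasure := by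
    simpa using isAddHaarMeasure_hausdorffMeasure (E := EuclideanSpace ℝ (Fin n))
  let C : ℝ≥0∞ := 2 ^ (n : ℝ) * μH[n] (closedBall (0 : EuclideanSpace ℝ (Fin n)) 1)
  have hC : C ≠ ⊤ := ENNReal.mul_ne_top (ENNReal.rpow_ne_top_of_nonneg n.cast_nonneg (by simp))
    (isCompact_closedBall _ _).measure_ne_top
  obtain ⟨T, -, hT_fin, hT⟩ := (isCompact_closedBall (0 : E) (R + 1)).finite_cover_balls
    (e := 1 / 20) (by norm_num)
  lift T to Finset E using hT_fin
  refine ⟨(∑ _q ∈ T ×ˢ T, C).toNNReal, fun M hMR hM => ?_⟩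
  rw [ENNReal.coe_toNNReal (by simp [ENNReal.mul_ne_top, hC])]
  let piece : E × E → Set E := fun q => {y | y ∈ M ∧ y ∈ closedBall q.2 (1 / 20) ∧
    ∃ p ∈ closedBall q.1 (1 / 20), dist y p = 1 ∧ ∀ z ∈ M, 1 ≤ dist z p}
  have hcover : M ⊆ ⋃ q ∈ T ×ˢ T, piece q := by
    intro y hy
    obtain ⟨p, -, hyp, hMp⟩ := hM y hy
    have hyR := mem_closedBall.1 (hMR hy)
    have hy' : y ∈ closedBall (0 : E) (R + 1) := mem_closedBall.2 (by linarith)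
    have hp' : p ∈ closedBall (0 : E) (R + 1) :=
      mem_closedBall.2 (by linarith [dist_triangle_left p 0 y])
    obtain ⟨y₀, hy₀, hyy₀⟩ := mem_iUnion₂.1 (hT hy')
    obtain ⟨p₀, hp₀, hpp₀⟩ := mem_iUnion₂.1 (hT hp')
    exact mem_iUnion₂.2 ⟨(p₀, y₀), Finset.mem_product.2 ⟨hp₀, hy₀⟩, hy,
      ball_subset_closedBall hyy₀, p, ball_subset_closedBall hpp₀, hyp, hMp⟩
  refine ((measure_mono hcover).trans (measure_biUnion_finset_le _ _)).trans
    (Finset.sum_le_sum fun q _ => ?_)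
  refine HasExteriorUnitBalls.hausdorffMeasure_le_of_subset (p₀ := q.1) (y₀ := q.2) ?_
    fun y hy => hy.2.1
  rintro y ⟨-, -, p, hp, hyp, hMp⟩
  exact ⟨p, hp, hyp, fun z hz => hMp z hz.1⟩

end SurfaceBound

section DistanceLevelSets

variable {E : Type*} [NormedAddCommGroup E] [InnerProductSpace ℝ E] [FiniteDimensional ℝ E]

theorem hasExteriorUnitBalls_image_infDist_eq (F : Set E) (x : E) {ε : ℝ} (hε : 0 < ε) :
    HasExteriorUnitBalls univ ((fun y => ε⁻¹ • (y - x)) '' {y | infDist y F = ε}) := by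
  have hdist : ∀ y z : E, dist (ε⁻¹ • (y - x)) (ε⁻¹ • (z - x)) = ε⁻¹ * dist y z := fun y z => by
    rw [dist_smul₀, dist_sub_right, Real.norm_of_nonneg (by positivity)]
  rintro _ ⟨y, hy, rfl⟩
  have hF : (closure F).Nonempty := by
    by_contra hempty
    rw [closure_nonempty_iff, not_nonempty_iff_eq_empty] at hempty
    simp [hempty, hε.ne] at hy
  obtain ⟨p, hp, hyp⟩ := isClosed_closure.exists_infDist_eq_dist hF y
  rw [infDist_closure] at hyp
  refine ⟨ε⁻¹ • (p - x), mem_univ _, ?_, ?_⟩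
  · rw [hdist, ← hyp, hy, inv_mul_cancel₀ hε.ne']
  · rintro _ ⟨z, hz, rfl⟩
    have hzp : ε ≤ dist z p := by
      rw [← show infDist z F = ε from hz, ← infDist_closure]
      exact infDist_le_dist_of_mem hp
    rwa [hdist, le_inv_mul_iff₀ hε, mul_one]

variable (E) in
theorem exists_hausdorffMeasure_infDist_eq_inter_closedBall_le [Nontrivial E] [MeasurableSpace E]
    [BorelSpace E] (a : ℝ) : ∃ C : ℝ≥0, ∀ (F : Set E) (x : E) (ε : ℝ), 0 < ε →
      μH[(Module.finrank ℝ E : ℝ) - 1] ({y | infDist y F = ε} ∩ closedBall x (a * ε)) ≤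
        ENNReal.ofReal (ε ^ ((Module.finrank ℝ E : ℝ) - 1)) * C := by
  obtain ⟨n, hn⟩ := Nat.exists_eq_succ_of_ne_zero (Module.finrank_pos (R := ℝ) (M := E)).ne'
  have : Fact (Module.finrank ℝ E = n + 1) := ⟨hn⟩
  obtain ⟨C, hC⟩ := HasExteriorUnitBalls.exists_hausdorffMeasure_le (E := E) (n := n) a
  refine ⟨C, fun F x ε hε => ?_⟩
  have hexp : (Module.finrank ℝ E : ℝ) - 1 = n := by simp [hn]
  let rescale : E → E := fun y => ε⁻¹ • (y - x)
  have hrescale : AntilipschitzWith ε.toNNReal rescale := .of_le_mul_dist fun y z => by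
    rw [dist_smul₀, dist_sub_right, Real.coe_toNNReal _ hε.le, Real.norm_of_nonneg (by positivity),
      mul_inv_cancel_left₀ hε.ne']
  have hball : rescale '' ({y | infDist y F = ε} ∩ closedBall x (a * ε)) ⊆ closedBall 0 a := by
    rintro _ ⟨y, hy, rfl⟩
    rw [mem_closedBall_zero_iff, norm_smul, Real.norm_of_nonneg (by positivity), ← dist_eq_norm,
      inv_mul_le_iff₀ hε, mul_comm]
    exact hy.2
  have hballs : HasExteriorUnitBalls univ
      (rescale '' ({y | infDist y F = ε} ∩ closedBall x (a * ε))) :=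
    (hasExteriorUnitBalls_image_infDist_eq F x hε).mono (image_mono inter_subset_left)
  rw [hexp]
  calc μH[n] ({y | infDist y F = ε} ∩ closedBall x (a * ε))
      ≤ (ε.toNNReal : ℝ≥0∞) ^ (n : ℝ) *
          μH[n] (rescale '' ({y | infDist y F = ε} ∩ closedBall x (a * ε))) :=
        hrescale.le_hausdorffMeasure_image n.cast_nonneg _
    _ ≤ (ε.toNNReal : ℝ≥0∞) ^ (n : ℝ) * C := by gcongr; exact hC _ hball hballs
    _ = ENNReal.ofReal (ε ^ (n : ℝ)) * C := by
        rw [← ENNReal.ofReal_rpow_of_pos hε, ENNReal.ofReal]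

end DistanceLevelSets

section Frontier

theorem cthickening_eq_setOf_infDist_le {X : Type*} [PseudoMetricSpace X] {F : Set X}
    (hF : F.Nonempty) {ε : ℝ} (hε : 0 ≤ ε) : cthickening ε F = {y | infDist y F ≤ ε} := by
  ext y
  rw [mem_cthickening_iff, mem_ofPred_eq, infDist,
    ENNReal.le_ofReal_iff_toReal_le (infEDist_ne_top hF) hε]

theorem frontier_setOf_le_eq_setOf_eq_and_not_isLocalMax {X : Type*} [TopologicalSpace X]
    {f : X → ℝ} (hf : Continuous f) (c : ℝ) :
    frontier {y | f y ≤ c} = {y | f y = c ∧ ¬IsLocalMax f y} := by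
  ext y
  rw [(isClosed_le hf continuous_const).frontier_eq, Set.mem_sdiff, mem_interior_iff_mem_nhds]
  constructor
  · rintro ⟨hle, hnhds⟩
    have heq : f y = c := hle.antisymm <| not_lt.1 fun hlt => hnhds <|
      (hf.continuousAt.eventually_lt_const hlt).mono fun z hz => hz.le
    exact ⟨heq, fun hmax => hnhds (hmax.mono fun z hz => hz.trans heq.le)⟩
  · rintro ⟨rfl, hmax⟩
    exact ⟨le_refl (f y), hmax⟩

theorem isClosed_setOf_isMaxOn_ball {X : Type*} [PseudoMetricSpace X] {f : X → ℝ}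
    (hf : Continuous f) (δ : ℝ) : IsClosed {y | IsMaxOn f (ball y δ) y} := by
  have hinter : {y | IsMaxOn f (ball y δ) y} = ⋂ z, ({y | δ ≤ dist z y} ∪ {y | f z ≤ f y}) := by
    ext y
    simp only [isMaxOn_iff, mem_ball, mem_ofPred_eq, mem_iInter, mem_union, ← not_lt (b := δ),
      ← imp_iff_not_or]
  rw [hinter]
  exact isClosed_iInter fun z => (isClosed_le continuous_const (by fun_prop)).union
    (isClosed_le continuous_const hf)

theorem iUnion_setOf_isMaxOn_ball_eq_setOf_isLocalMax {X : Type*} [PseudoMetricSpace X]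
    (f : X → ℝ) : ⋃ n : ℕ, {y | IsMaxOn f (ball y (1 / ((n : ℝ) + 1))) y} =
      {y | IsLocalMax f y} := by
  ext y
  simp only [mem_iUnion, mem_ofPred_eq, IsLocalMax, IsMaxFilter,
    nhds_basis_ball_inv_nat_succ.eventually_iff, isMaxOn_iff, true_and]

theorem antitone_setOf_isMaxOn_ball {X : Type*} [PseudoMetricSpace X] (f : X → ℝ) :
    Antitone fun δ : ℝ => {y | IsMaxOn f (ball y δ) y} :=
  fun _ _ hδ _ hy => hy.on_subset (ball_subset_ball hδ)

theorem measure_inter_setOf_not_isLocalMax {X : Type*} [PseudoMetricSpace X] [MeasurableSpace X]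
    [OpensMeasurableSpace X] (μ : Measure X) {f : X → ℝ} (hf : Continuous f) {A : Set X}
    (hA : MeasurableSet A) (hμA : μ A ≠ ⊤) :
    μ (A ∩ {y | ¬IsLocalMax f y}) =
      μ A - ⨆ n : ℕ, μ (A ∩ {y | IsMaxOn f (ball y (1 / ((n : ℝ) + 1))) y}) := by
  have hmono : Monotone fun n : ℕ => A ∩ {y | IsMaxOn f (ball y (1 / ((n : ℝ) + 1))) y} :=
    fun m n hmn => inter_subset_inter_right A
      (antitone_setOf_isMaxOn_ball f (one_div_le_one_div_of_le (by positivity) (by gcongr)))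
  have hmeas : MeasurableSet (A ∩ {y | IsLocalMax f y}) := by
    rw [← iUnion_setOf_isMaxOn_ball_eq_setOf_isLocalMax]
    exact hA.inter (.iUnion fun n => (isClosed_setOf_isMaxOn_ball hf _).measurableSet)
  rw [← hmono.measure_iUnion, ← inter_iUnion, iUnion_setOf_isMaxOn_ball_eq_setOf_isLocalMax,
    ← measure_sdiff inter_subset_left hmeas.nullMeasurableSet
      (measure_ne_top_of_subset inter_subset_left hμA)]
  congr 1
  ext y
  simp +contextual

variable {E : Type*} [NormedAddCommGroup E] [InnerProductSpace ℝ E] [FiniteDimensional ℝ E]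
  [Nontrivial E] [MeasurableSpace E] [BorelSpace E]

theorem hausdorffMeasure_frontier_cthickening_inter_closedBall_of_pos {F : Set E}
    (hF : F.Nonempty) (a : ℝ) (x : E) {ε : ℝ} (hε : 0 < ε) :
    μH[(Module.finrank ℝ E : ℝ) - 1] (frontier (cthickening ε F) ∩ closedBall x (a * ε)) =
      μH[(Module.finrank ℝ E : ℝ) - 1] ({y | infDist y F = ε} ∩ closedBall x (a * ε)) -
        ⨆ n : ℕ, μH[(Module.finrank ℝ E : ℝ) - 1] ({y | infDist y F = ε} ∩ closedBall x (a * ε) ∩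
          {y | IsMaxOn (infDist · F) (ball y (1 / ((n : ℝ) + 1))) y}) := by
  obtain ⟨C, hC⟩ := exists_hausdorffMeasure_infDist_eq_inter_closedBall_le E a
  have hcont : Continuous (infDist · F) := continuous_infDist_pt F
  rw [cthickening_eq_setOf_infDist_le hF hε.le,
    frontier_setOf_le_eq_setOf_eq_and_not_isLocalMax hcont, ← measure_inter_setOf_not_isLocalMax _
      hcont ((isClosed_eq hcont continuous_const).inter isClosed_closedBall).measurableSet
      ((hC F x ε hε).trans_lt (by finiteness)).ne, inter_right_comm]
  rfl

theorem measurable_hausdorffMeasure_frontier_cthickening_inter_closedBall (F : Set E) (a : ℝ) :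
    Measurable fun p : ℝ × E => μH[(Module.finrank ℝ E : ℝ) - 1]
      (frontier (cthickening p.1 F) ∩ closedBall p.2 (a * p.1)) := by
  obtain rfl | hF := F.eq_empty_or_nonempty
  · simp
  have hs : 0 ≤ (Module.finrank ℝ E : ℝ) - 1 :=
    sub_nonneg.2 (Nat.one_le_cast.2 Module.finrank_pos)
  let near : Set ((ℝ × E) × E) := {q | q.2 ∈ closedBall q.1.2 (a * q.1.1)}
  have hnear : IsClosed near := isClosed_le
    (continuous_snd.dist continuous_fst.snd) (continuous_const.mul continuous_fst.fst)
  let level : Set ((ℝ × E) × E) := {q | infDist q.2 F = q.1.1} ∩ near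
  have hlevel : IsClosed level :=
    (isClosed_eq ((continuous_infDist_pt F).comp continuous_snd) (by fun_prop)).inter hnear
  have hpos := (measurable_hausdorffMeasure_slice hs hlevel).sub
    (.iSup fun n : ℕ => measurable_hausdorffMeasure_slice hs <| hlevel.inter <|
      (isClosed_setOf_isMaxOn_ball (continuous_infDist_pt F) (1 / ((n : ℝ) + 1))).preimage
        continuous_snd)
  have hnonpos := measurable_hausdorffMeasure_slice hs
    ((isClosed_frontier.preimage continuous_snd).inter hnear :
      IsClosed (Prod.snd ⁻¹' frontier (closure F) ∩ near))
  have hite : Measurable fun p : ℝ × E => if 0 < p.1 then _ else _ :=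
    .ite (measurableSet_lt measurable_const measurable_fst) hpos hnonpos
  convert hite using 2 with ⟨ε, x⟩
  split_ifs with hε
  · exact hausdorffMeasure_frontier_cthickening_inter_closedBall_of_pos hF a x hε
  · rw [cthickening_of_nonpos (not_lt.1 hε)]
    rfl

end Frontier

section SurfaceDensity

variable {E : Type*} [NormedAddCommGroup E] [InnerProductSpace ℝ E] [MeasurableSpace E]
  [BorelSpace E]

/-- The scale-invariant surface content `ε^{-(d-1)} H^{d-1}(∂F(ε) ∩ B(x, aε))` of the `ε`-parallel
set of `F` near `x`, where `d` is the dimension of the ambient space. -/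
noncomputable def surfaceDensity (F : Set E) (a ε : ℝ) (x : E) : ℝ :=
  ε ^ (-((Module.finrank ℝ E : ℝ) - 1)) *
    (μH[(Module.finrank ℝ E : ℝ) - 1] (frontier (cthickening ε F) ∩ closedBall x (a * ε))).toReal

theorem surfaceDensity_nonneg (F : Set E) (a : ℝ) {ε : ℝ} (hε : 0 ≤ ε) (x : E) :
    0 ≤ surfaceDensity F a ε x :=
  mul_nonneg (Real.rpow_nonneg hε _) ENNReal.toReal_nonneg

variable [FiniteDimensional ℝ E] [Nontrivial E]

theorem measurable_surfaceDensity (F : Set E) (a : ℝ) :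
    Measurable fun p : ℝ × E => surfaceDensity F a p.1 p.2 :=
  (measurable_fst.pow_const _).mul
    (measurable_hausdorffMeasure_frontier_cthickening_inter_closedBall F a).ennreal_toReal

variable (E) in
theorem exists_surfaceDensity_le (a : ℝ) :
    ∃ C : ℝ, ∀ (F : Set E) (ε : ℝ) (x : E), 0 < ε → surfaceDensity F a ε x ≤ C := by
  obtain ⟨C, hC⟩ := exists_hausdorffMeasure_infDist_eq_inter_closedBall_le E a
  refine ⟨C, fun F ε x hε => ?_⟩
  have hsub : frontier (cthickening ε F) ⊆ {y | infDist y F = ε} := by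
    obtain rfl | hF := F.eq_empty_or_nonempty
    · simp
    rw [cthickening_eq_setOf_infDist_le hF hε.le]
    exact frontier_le_subset_eq (continuous_infDist_pt F) continuous_const
  have hle := ENNReal.toReal_mono (by finiteness)
    ((measure_mono (inter_subset_inter_left _ hsub)).trans (hC F x ε hε))
  rw [ENNReal.toReal_mul, ENNReal.toReal_ofReal (by positivity), ENNReal.coe_toReal] at hle
  rwa [surfaceDensity, Real.rpow_neg hε.le, inv_mul_le_iff₀ (by positivity)]

end SurfaceDensity

/-- `f` is a similarity with ratio `r`: it multiplies all distances by `r`. -/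
def IsSimilarity {X Y : Type*} [PseudoMetricSpace X] [PseudoMetricSpace Y] (r : ℝ) (f : X → Y) :
    Prop :=
  ∀ x y, dist (f x) (f y) = r * dist x y

namespace IsSimilarity

section MetricSpace

variable {X Y : Type*} [MetricSpace X] [MetricSpace Y] {r : ℝ} {f : X → Y}

theorem lipschitzWith (hf : IsSimilarity r f) : LipschitzWith r.toNNReal f :=
  .of_dist_le_mul fun x y => by
    rw [hf]
    gcongr
    exact Real.le_coe_toNNReal r

theorem antilipschitzWith (hf : IsSimilarity r f) (hr : 0 < r) :
    AntilipschitzWith r⁻¹.toNNReal f :=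
  .of_le_mul_dist fun x y => by
    rw [Real.coe_toNNReal _ (inv_pos.2 hr).le, hf, inv_mul_cancel_left₀ hr.ne']

theorem infDist_image (hf : IsSimilarity r f) (hr : 0 < r) (A : Set X) (x : X) :
    infDist (f x) (f '' A) = r * infDist x A := by
  obtain rfl | hA := A.eq_empty_or_nonempty
  · simp
  refine le_antisymm ?_ ((le_infDist (hA.image f)).2 ?_)
  · rw [← div_le_iff₀' hr, le_infDist hA]
    intro y hy
    rw [div_le_iff₀' hr, ← hf]
    exact infDist_le_dist_of_mem (mem_image_of_mem f hy)
  · rintro _ ⟨y, hy, rfl⟩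
    rw [hf]
    gcongr
    exact infDist_le_dist_of_mem hy

theorem hausdorffMeasure_image [MeasurableSpace X] [BorelSpace X] [MeasurableSpace Y]
    [BorelSpace Y] (hf : IsSimilarity r f) (hr : 0 < r) {s : ℝ} (hs : 0 ≤ s) (A : Set X) :
    μH[s] (f '' A) = ENNReal.ofReal (r ^ s) * μH[s] A := by
  rw [← ENNReal.ofReal_rpow_of_pos hr]
  refine le_antisymm (hf.lipschitzWith.hausdorffMeasure_image_le hs A) ?_
  have hinv : ENNReal.ofReal r ^ s * ENNReal.ofReal r⁻¹ ^ s = 1 := by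
    rw [← ENNReal.mul_rpow_of_nonneg _ _ hs, ← ENNReal.ofReal_mul hr.le, mul_inv_cancel₀ hr.ne',
      ENNReal.ofReal_one, ENNReal.one_rpow]
  calc ENNReal.ofReal r ^ s * μH[s] A
      ≤ ENNReal.ofReal r ^ s * (ENNReal.ofReal r⁻¹ ^ s * μH[s] (f '' A)) := by
        gcongr
        exact (hf.antilipschitzWith hr).le_hausdorffMeasure_image hs A
    _ = μH[s] (f '' A) := by rw [← mul_assoc, hinv, one_mul]

theorem cthickening_image (hf : IsSimilarity r f) (hr : 0 < r) (hsurj : f.Surjective) {ε : ℝ}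
    (hε : 0 ≤ ε) (A : Set X) : cthickening (r * ε) (f '' A) = f '' cthickening ε A := by
  obtain rfl | hA := A.eq_empty_or_nonempty
  · simp
  ext y
  obtain ⟨y, rfl⟩ := hsurj y
  rw [(hf.antilipschitzWith hr).injective.mem_set_image, cthickening_eq_setOf_infDist_le hA hε,
    cthickening_eq_setOf_infDist_le (hA.image f) (by positivity), mem_ofPred_eq, mem_ofPred_eq,
    hf.infDist_image hr, mul_le_mul_iff_right₀ hr]

theorem closedBall_image (hf : IsSimilarity r f) (hr : 0 < r) (hsurj : f.Surjective) (x : X)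
    (ρ : ℝ) : closedBall (f x) (r * ρ) = f '' closedBall x ρ := by
  ext y
  obtain ⟨y, rfl⟩ := hsurj y
  rw [(hf.antilipschitzWith hr).injective.mem_set_image, mem_closedBall, mem_closedBall, hf,
    mul_le_mul_iff_right₀ hr]

end MetricSpace

theorem exists_homeomorph {E : Type*} [NormedAddCommGroup E] [NormedSpace ℝ E]
    [StrictConvexSpace ℝ E] [FiniteDimensional ℝ E] {r : ℝ} {f : E → E} (hf : IsSimilarity r f)
    (hr : 0 < r) : ∃ e : E ≃ₜ E, ⇑e = f := by
  have hiso : Isometry fun x => r⁻¹ • f x := Isometry.of_dist_eq fun x y => by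
    rw [dist_smul₀, hf, Real.norm_of_nonneg (inv_pos.2 hr).le, inv_mul_cancel_left₀ hr.ne']
  have : Inhabited E := ⟨0⟩
  let e := hiso.affineIsometryOfStrictConvexSpace.toAffineIsometryEquiv rfl
  refine ⟨e.toHomeomorph.trans (Homeomorph.smulOfNeZero r hr.ne'), funext fun x => ?_⟩
  exact smul_inv_smul₀ hr.ne' (f x)

theorem surfaceDensity_image {E : Type*} [NormedAddCommGroup E] [InnerProductSpace ℝ E]
    [FiniteDimensional ℝ E] [Nontrivial E] [MeasurableSpace E] [BorelSpace E] {r : ℝ} {f : E → E}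
    (hf : IsSimilarity r f) (hr : 0 < r) (F : Set E) (a : ℝ) {ε : ℝ} (hε : 0 ≤ ε) (x : E) :
    surfaceDensity (f '' F) a (r * ε) (f x) = surfaceDensity F a ε x := by
  obtain ⟨e, rfl⟩ := hf.exists_homeomorph hr
  have hs : 0 ≤ (Module.finrank ℝ E : ℝ) - 1 :=
    sub_nonneg.2 (Nat.one_le_cast.2 Module.finrank_pos)
  have hr_pow : 0 < r ^ ((Module.finrank ℝ E : ℝ) - 1) := Real.rpow_pos_of_pos hr _
  rw [surfaceDensity, surfaceDensity, hf.cthickening_image hr e.surjective hε, mul_left_comm a r ε,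
    hf.closedBall_image hr e.surjective, ← e.image_frontier, ← image_inter e.injective,
    hf.hausdorffMeasure_image hr hs, ENNReal.toReal_mul, ENNReal.toReal_ofReal hr_pow.le,
    Real.mul_rpow hr.le hε, Real.rpow_neg hr.le]
  field_simp

end IsSimilarity

section Locality

theorem mem_cthickening_of_inter_ball_subset {X : Type*} [PseudoMetricSpace X] {F G : Set X}
    {x y : X} {ε ρ : ℝ} (hε : 0 ≤ ε) (hFG : F ∩ ball x ρ ⊆ G) (hy : y ∈ ball x (ρ - ε))
    (hyF : y ∈ cthickening ε F) : y ∈ cthickening ε G := by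
  rw [mem_ball] at hy
  rw [mem_cthickening_iff] at hyF ⊢
  refine le_of_forall_gt fun c hc => ?_
  have hlt : infEDist y F < min c (ENNReal.ofReal (ρ - dist y x)) :=
    hyF.trans_lt (lt_min hc ((ENNReal.ofReal_lt_ofReal_iff_of_nonneg hε).2 (by linarith)))
  obtain ⟨z, hzF, hyz⟩ := infEDist_lt_iff.1 hlt
  have hyz_lt : dist y z < ρ - dist y x := by
    rw [← edist_lt_ofReal]
    exact hyz.trans_le (min_le_right _ _)
  have hzx : z ∈ ball x ρ := mem_ball.2 (by linarith [dist_triangle_left z x y])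
  exact (infEDist_le_edist_of_mem (hFG ⟨hzF, hzx⟩)).trans_lt (hyz.trans_le (min_le_left _ _))

theorem surfaceDensity_congr {E : Type*} [NormedAddCommGroup E] [InnerProductSpace ℝ E]
    [MeasurableSpace E] [BorelSpace E] {F G : Set E} {a ε ρ : ℝ} {x : E} (hε : 0 ≤ ε)
    (hρ : a * ε + ε < ρ) (hFG : F ∩ ball x ρ = G ∩ ball x ρ) :
    surfaceDensity F a ε x = surfaceDensity G a ε x := by
  have hthick : cthickening ε F ∩ ball x (ρ - ε) = cthickening ε G ∩ ball x (ρ - ε) := by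
    ext y
    exact and_congr_left fun hy => ⟨
      mem_cthickening_of_inter_ball_subset hε (hFG.subset.trans inter_subset_left) hy,
      mem_cthickening_of_inter_ball_subset hε (hFG.superset.trans inter_subset_left) hy⟩
  have hfrontier : frontier (cthickening ε F) ∩ ball x (ρ - ε) =
      frontier (cthickening ε G) ∩ ball x (ρ - ε) := by
    rw [← frontier_inter_open_inter isOpen_ball, hthick, frontier_inter_open_inter isOpen_ball]
  have hball : closedBall x (a * ε) ⊆ ball x (ρ - ε) := closedBall_subset_ball (by linarith)
  rw [surfaceDensity, surfaceDensity, ← inter_eq_self_of_subset_right hball, ← inter_assoc,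
    hfrontier, inter_assoc]

theorem inter_image_subset_image_of_pairwise_disjoint {X ι : Type*} [TopologicalSpace X]
    {S : ι → X → X} (hcont : ∀ i, Continuous (S i)) (hopen : ∀ i, IsOpenMap (S i)) {F U : Set X}
    (hF : F ⊆ ⋃ i, S i '' F) (hU : IsOpen U) (hFU : F ⊆ closure U)
    (hdisj : Pairwise fun i j => Disjoint (S i '' U) (S j '' U)) (i : ι) :
    F ∩ S i '' U ⊆ S i '' F := by
  rintro z ⟨hzF, hzU⟩
  obtain ⟨j, hzj⟩ := mem_iUnion.1 (hF hzF)
  obtain rfl | hij := eq_or_ne i j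
  · exact hzj
  have hz_closure : z ∈ closure (S j '' U) :=
    image_closure_subset_closure_image (hcont j) (image_mono hFU hzj)
  exact (((hdisj hij).closure_right (hopen i U hU)).le_bot ⟨hzU, hz_closure⟩).elim

theorem subset_of_subset_iUnion_image_of_contracting {X ι : Type*} [PseudoMetricSpace X]
    {S : ι → X → X} {K : ι → ℝ≥0} (hK : ∀ i, K i < 1) (hS : ∀ i, LipschitzWith (K i) (S i))
    {F J : Set X} (hF : IsCompact F) (hF_sub : F ⊆ ⋃ i, S i '' F) (hJ : IsClosed J)
    (hJ_ne : J.Nonempty) (hJ_maps : ∀ i, MapsTo (S i) J J) : F ⊆ J := by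
  obtain rfl | hF_ne := F.eq_empty_or_nonempty
  · exact empty_subset J
  obtain ⟨x, hx, hmax⟩ := hF.exists_isMaxOn hF_ne (continuous_infDist_pt J).continuousOn
  obtain ⟨i, y, hy, rfl⟩ := mem_iUnion.1 (hF_sub hx)
  have hcontract : infDist (S i y) J ≤ K i * infDist y J := by
    have : Nonempty J := hJ_ne.to_subtype
    rw [infDist_eq_iInf (x := y), Real.mul_iInf_of_nonneg (K i).coe_nonneg]
    exact le_ciInf fun z =>
      (infDist_le_dist_of_mem (hJ_maps i z.2)).trans ((hS i).dist_le_mul y z)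
  have hzero : infDist (S i y) J ≤ 0 := by
    have hle : infDist y J ≤ infDist (S i y) J := hmax hy
    have hKi : (K i : ℝ) < 1 := hK i
    nlinarith [infDist_nonneg (x := y) (s := J)]
  intro z hz
  exact (hJ.mem_iff_infDist_zero hJ_ne).2 (((hmax hz).trans hzero).antisymm infDist_nonneg)

theorem surfaceDensity_apply_of_pairwise_disjoint {E ι : Type*} [NormedAddCommGroup E]
    [InnerProductSpace ℝ E] [FiniteDimensional ℝ E] [Nontrivial E] [MeasurableSpace E]
    [BorelSpace E] {S : ι → E → E} {r : ι → ℝ} (hr : ∀ i, 0 < r i)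
    (hS : ∀ i, IsSimilarity (r i) (S i)) {F J : Set E} (hF : F = ⋃ i, S i '' F)
    (hFJ : F ⊆ closure (interior J))
    (hdisj : Pairwise fun i j => Disjoint (S i '' interior J) (S j '' interior J)) (i : ι)
    {a b ε : ℝ} (hab : a + 1 < b) (hε : 0 < ε) {x : E}
    (hεb : b * ε ≤ infDist (S i x) (S i '' J)ᶜ) :
    surfaceDensity F a ε (S i x) = surfaceDensity F a (ε / r i) x := by
  choose e he using fun i => (hS i).exists_homeomorph (hr i)
  have hball : ball (S i x) (b * ε) ⊆ S i '' interior J := by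
    rw [← he, (e i).image_interior, he]
    exact interior_maximal ((ball_subset_ball hεb).trans ball_infDist_compl_subset) isOpen_ball
  have hlocal : F ∩ ball (S i x) (b * ε) = S i '' F ∩ ball (S i x) (b * ε) := by
    refine Subset.antisymm (fun y hy => ⟨?_, hy.2⟩) ?_
    · exact inter_image_subset_image_of_pairwise_disjoint (fun j => he j ▸ (e j).continuous)
        (fun j => he j ▸ (e j).isOpenMap) hF.subset isOpen_interior hFJ hdisj i ⟨hy.1, hball hy.2⟩
    · conv_rhs => rw [hF]
      exact inter_subset_inter_left _ (subset_iUnion (fun j => S j '' F) i)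
  rw [surfaceDensity_congr hε.le (by nlinarith) hlocal,
    ← (hS i).surfaceDensity_image (hr i) F a (div_pos hε (hr i)).le x,
    mul_div_cancel₀ ε (hr i).ne']

end Locality

section Birkhoff

/-- The maximum of `birkhoffSum T g k x` over `k ≤ n`, given by the recursion that drives the proof
of the ergodic theorem. -/
noncomputable def maxBirkhoffSum {X : Type*} (T : X → X) (g : X → ℝ) : ℕ → X → ℝ
  | 0, _ => 0
  | n + 1, x => max 0 (g x + maxBirkhoffSum T g n (T x))

section Pointwise

variable {X : Type*} (T : X → X) (g : X → ℝ)

theorem maxBirkhoffSum_nonneg (n : ℕ) (x : X) : 0 ≤ maxBirkhoffSum T g n x := by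
  cases n with
  | zero => exact le_rfl
  | succ n => exact le_max_left _ _

theorem maxBirkhoffSum_le_succ (n : ℕ) (x : X) :
    maxBirkhoffSum T g n x ≤ maxBirkhoffSum T g (n + 1) x := by
  induction n generalizing x with
  | zero => exact maxBirkhoffSum_nonneg T g 1 x
  | succ n ih => exact max_le_max_left 0 (add_le_add_right (ih (T x)) (g x))

theorem birkhoffSum_le_maxBirkhoffSum (n : ℕ) (x : X) :
    birkhoffSum T g n x ≤ maxBirkhoffSum T g n x := by
  induction n generalizing x with
  | zero => rw [birkhoffSum_zero, maxBirkhoffSum]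
  | succ n ih =>
    rw [birkhoffSum_succ']
    exact (add_le_add_right (ih (T x)) (g x)).trans (le_max_right _ _)

theorem abs_maxBirkhoffSum_succ_sub_le (n : ℕ) (x : X) :
    |maxBirkhoffSum T g (n + 1) x - maxBirkhoffSum T g n (T x)| ≤ |g x| := by
  have hnonneg := maxBirkhoffSum_nonneg T g n (T x)
  rw [maxBirkhoffSum]
  obtain hneg | hpos := le_total (g x + maxBirkhoffSum T g n (T x)) 0
  · rw [max_eq_left hneg, zero_sub, abs_neg, abs_of_nonneg hnonneg]
    linarith [neg_le_abs (g x)]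
  · rw [max_eq_right hpos, add_sub_cancel_right]

theorem bddAbove_range_maxBirkhoffSum_apply_iff (x : X) :
    BddAbove (range fun n => maxBirkhoffSum T g n (T x)) ↔
      BddAbove (range fun n => maxBirkhoffSum T g n x) := by
  simp only [bddAbove_def, forall_mem_range]
  constructor
  · rintro ⟨B, hB⟩
    refine ⟨max 0 (g x + B), fun n => ?_⟩
    cases n with
    | zero => exact le_max_left _ _
    | succ n => exact max_le_max_left 0 (add_le_add_right (hB n) (g x))
  · rintro ⟨B, hB⟩
    refine ⟨B - g x, fun n => ?_⟩
    have hle : g x + maxBirkhoffSum T g n (T x) ≤ maxBirkhoffSum T g (n + 1) x := le_max_right _ _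
    linarith [hB (n + 1)]

theorem tendsto_maxBirkhoffSum_succ_sub {x : X}
    (hx : ¬BddAbove (range fun n => maxBirkhoffSum T g n x)) :
    Tendsto (fun n => maxBirkhoffSum T g (n + 1) x - maxBirkhoffSum T g n (T x)) atTop
      (𝓝 (g x)) := by
  rw [← bddAbove_range_maxBirkhoffSum_apply_iff] at hx
  have hmono : Monotone fun n => maxBirkhoffSum T g n (T x) :=
    monotone_nat_of_le_succ fun n => maxBirkhoffSum_le_succ T g n (T x)
  have htop : Tendsto (fun n => maxBirkhoffSum T g n (T x)) atTop atTop :=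
    (tendsto_atTop_of_monotone hmono).resolve_right fun ⟨_, hl⟩ => hx hl.bddAbove_range
  refine tendsto_const_nhds.congr' ?_
  filter_upwards [htop.eventually_ge_atTop (-g x)] with n hn
  rw [maxBirkhoffSum, max_eq_right (by linarith), add_sub_cancel_right]

end Pointwise

variable {X : Type*} [MeasurableSpace X] {μ : Measure X} {T : X → X} {g : X → ℝ}

theorem measurable_maxBirkhoffSum (hT : Measurable T) (hg : Measurable g) (n : ℕ) :
    Measurable (maxBirkhoffSum T g n) := by
  induction n with
  | zero => exact measurable_const
  | succ n ih => exact measurable_const.max (hg.add (ih.comp hT))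

theorem integrable_maxBirkhoffSum (hT : MeasurePreserving T μ μ) (hg : Integrable g μ) (n : ℕ) :
    Integrable (maxBirkhoffSum T g n) μ := by
  induction n with
  | zero => exact integrable_zero _ _ _
  | succ n ih => exact (integrable_zero _ _ _).sup (hg.add (hT.integrable_comp_of_integrable ih))

theorem integral_maxBirkhoffSum_succ_sub_nonneg (hT : MeasurePreserving T μ μ)
    (hg : Integrable g μ) (n : ℕ) :
    0 ≤ ∫ x, (maxBirkhoffSum T g (n + 1) x - maxBirkhoffSum T g n (T x)) ∂μ := by
  have hint := integrable_maxBirkhoffSum hT hg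
  have hint_comp : Integrable (fun x => maxBirkhoffSum T g n (T x)) μ :=
    hT.integrable_comp_of_integrable (hint n)
  have hcomp : ∫ x, maxBirkhoffSum T g n (T x) ∂μ = ∫ x, maxBirkhoffSum T g n x ∂μ := by
    rw [← integral_map hT.aemeasurable (by simpa [hT.map_eq] using (hint n).1), hT.map_eq]
  rw [integral_sub (hint (n + 1)) hint_comp, hcomp, sub_nonneg]
  exact integral_mono (hint n) (hint (n + 1)) (maxBirkhoffSum_le_succ T g n)

-- Otherwise the maxima tend to infinity almost everywhere, so their increments tend to `g`; these
-- have nonnegative integrals.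
theorem ae_bddAbove_birkhoffSum_of_integral_neg (hT : Ergodic T μ) (hg_meas : Measurable g)
    (hg : Integrable g μ) (hneg : ∫ x, g x ∂μ < 0) :
    ∀ᵐ x ∂μ, BddAbove (range fun n => birkhoffSum T g n x) := by
  have hmeas := measurable_maxBirkhoffSum hT.measurable hg_meas
  obtain hbdd | hunbdd := hT.toPreErgodic.ae_mem_or_ae_notMem (measurableSet_bddAbove_range hmeas)
    (ext (bddAbove_range_maxBirkhoffSum_apply_iff T g))
  · filter_upwards [hbdd] with x hx
    exact hx.range_mono _ (birkhoffSum_le_maxBirkhoffSum T g · x)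
  · refine absurd ?_ hneg.not_ge
    have hlim : Tendsto
        (fun n => ∫ x, (maxBirkhoffSum T g (n + 1) x - maxBirkhoffSum T g n (T x)) ∂μ) atTop
        (𝓝 (∫ x, g x ∂μ)) := by
      refine tendsto_integral_of_dominated_convergence (fun x => |g x|)
        (fun n => ((hmeas (n + 1)).sub ((hmeas n).comp hT.measurable)).aestronglyMeasurable) hg.abs
        (fun n => .of_forall (abs_maxBirkhoffSum_succ_sub_le T g n)) ?_
      filter_upwards [hunbdd] with x hx using tendsto_maxBirkhoffSum_succ_sub T g hx
    exact ge_of_tendsto' hlim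
      (integral_maxBirkhoffSum_succ_sub_nonneg hT.toMeasurePreserving hg)

variable [IsProbabilityMeasure μ]

theorem ae_eventually_birkhoffSum_div_lt (hT : Ergodic T μ) (hg : Integrable g μ) {c : ℝ}
    (hc : ∫ x, g x ∂μ < c) : ∀ᵐ x ∂μ, ∀ᶠ n : ℕ in atTop, birkhoffSum T g n x / n < c := by
  wlog hg_meas : Measurable g generalizing g
  · have hae := hg.1.ae_eq_mk
    filter_upwards [this (hg.congr hae) (integral_congr_ae hae ▸ hc)
      hg.1.stronglyMeasurable_mk.measurable,
      ae_all_iff.2 (hT.quasiMeasurePreserving.birkhoffSum_ae_eq_of_ae_eq hae)] with x hx hsum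
    simpa only [hsum] using hx
  obtain ⟨c', hc', hc'c⟩ := exists_between hc
  have hbdd := ae_bddAbove_birkhoffSum_of_integral_neg hT (hg_meas.sub_const c')
    (hg.sub (integrable_const c')) (by
      rw [integral_sub hg (integrable_const c'), integral_const, probReal_univ, one_smul]
      exact sub_neg.2 hc')
  filter_upwards [hbdd] with x ⟨B, hB⟩
  filter_upwards [(tendsto_const_div_atTop_nhds_zero_nat B).eventually_lt_const (sub_pos.2 hc'c),
    eventually_gt_atTop 0] with n hn hn_pos
  have hn_pos : (0 : ℝ) < n := Nat.cast_pos.2 hn_pos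
  have hsum : birkhoffSum T g n x - n * c' ≤ B := by
    simpa [birkhoffSum, Finset.sum_sub_distrib] using hB (mem_range_self n)
  rw [div_lt_iff₀ hn_pos] at hn ⊢
  linarith

theorem ae_tendsto_birkhoffSum_div (hT : Ergodic T μ) (hg : Integrable g μ) :
    ∀ᵐ x ∂μ, Tendsto (fun n : ℕ => birkhoffSum T g n x / n) atTop (𝓝 (∫ x, g x ∂μ)) := by
  have hupper : ∀ {f : X → ℝ}, Integrable f μ → ∀ᵐ x ∂μ, ∀ k : ℕ, ∀ᶠ n : ℕ in atTop,
      birkhoffSum T f n x / n < ∫ x, f x ∂μ + 1 / ((k : ℝ) + 1) := fun hf => ae_all_iff.2 fun k =>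
    ae_eventually_birkhoffSum_div_lt hT hf (lt_add_of_pos_right _ Nat.one_div_pos_of_nat)
  filter_upwards [hupper hg, hupper hg.neg] with x hlt hgt
  refine (nhds_basis_ball_inv_nat_succ.tendsto_right_iff).2 fun k _ => ?_
  filter_upwards [hlt k, hgt k] with n hn_lt hn_gt
  simp only [Pi.neg_apply, integral_neg, birkhoffSum_neg, neg_div] at hn_gt
  rw [mem_ball, Real.dist_eq, abs_sub_lt_iff]
  constructor <;> linarith

end Birkhoff

section BernoulliShift

/-- The left shift on one-sided sequences, forgetting the first letter. -/
def shift {α : Type*} (w : ℕ → α) : ℕ → α :=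
  fun n => w (n + 1)

theorem shift_iterate_apply {α : Type*} (n : ℕ) (w : ℕ → α) (k : ℕ) :
    (shift^[n] w) k = w (k + n) := by
  induction n generalizing w with
  | zero => rfl
  | succ n ih => rw [Function.iterate_succ_apply, ih, shift, add_assoc]

variable {α : Type*} [MeasurableSpace α] (P : Measure α) [IsProbabilityMeasure P]

theorem measurePreserving_shift :
    MeasurePreserving shift (Measure.infinitePi fun _ : ℕ => P)
      (Measure.infinitePi fun _ : ℕ => P) :=
  ⟨measurable_pi_lambda _ fun n => measurable_pi_apply (n + 1),
    Measure.map_infinitePi_infinitePi_of_inj (add_left_injective 1)⟩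

theorem measurableSet_iSup_comap_eval_preimage_shift_iterate (n : ℕ) {B : Set (ℕ → α)}
    (hB : MeasurableSet B) :
    MeasurableSet[⨆ i ∈ Ici n, MeasurableSpace.comap (Function.eval i) inferInstance]
      (shift^[n] ⁻¹' B) := by
  have hmeas : Measurable[⨆ i ∈ Ici n,
      MeasurableSpace.comap (Function.eval i) (inferInstance : MeasurableSpace α)]
      (shift^[n] : (ℕ → α) → ℕ → α) := by
    refine @measurable_pi_lambda _ _ _ (_) _ _ fun k => ?_
    simp only [shift_iterate_apply]
    exact measurable_iff_comap_le.2 (le_iSup₂_of_le (k + n) (Nat.le_add_left n k) le_rfl)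
  exact hmeas hB

theorem iIndep_comap_eval :
    ProbabilityTheory.iIndep
      (fun i => MeasurableSpace.comap (Function.eval i) (inferInstance : MeasurableSpace α))
      (Measure.infinitePi fun _ : ℕ => P) :=
  ProbabilityTheory.iIndepFun_infinitePi (X := fun _ => id) fun _ => measurable_id

-- A shift-invariant set belongs to the tail σ-algebra, so Kolmogorov's zero-one law applies.
theorem ergodic_shift : Ergodic shift (Measure.infinitePi fun _ : ℕ => P) where
  toMeasurePreserving := measurePreserving_shift P
  aeconst_set A hA hinv := by
    have htail : MeasurableSet[limsup
        (fun i : ℕ => MeasurableSpace.comap (Function.eval i) (inferInstance : MeasurableSpace α))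
        atTop] A := by
      rw [limsup_eq_iInf_iSup_of_nat, MeasurableSpace.measurableSet_iInf]
      intro n
      rw [← Function.IsFixedPt.preimage_iterate hinv n]
      exact measurableSet_iSup_comap_eval_preimage_shift_iterate n hA
    rw [eventuallyConst_set', ae_eq_empty, ae_eq_univ, prob_compl_eq_zero_iff hA]
    exact ProbabilityTheory.measure_zero_or_one_of_measurableSet_limsup_atTop
      (fun i => (measurable_pi_apply i).comap_le) (iIndep_comap_eval P) htail

theorem infinitePi_cylinder_inter_preimage_shift_iterate [MeasurableSingletonClass α] (x : ℕ → α)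
    (n : ℕ) {B : Set (ℕ → α)} (hB : MeasurableSet B) :
    Measure.infinitePi (fun _ : ℕ => P) (PiNat.cylinder x n ∩ shift^[n] ⁻¹' B) =
      Measure.infinitePi (fun _ : ℕ => P) (PiNat.cylinder x n) *
        Measure.infinitePi (fun _ : ℕ => P) B := by
  have hcylinder : MeasurableSet[⨆ i ∈ Iio n,
      MeasurableSpace.comap (Function.eval i) (inferInstance : MeasurableSpace α)]
      (PiNat.cylinder x n) := by
    rw [PiNat.cylinder_eq_pi, Set.pi_def]
    refine Finset.measurableSet_biInter _ fun i hi => ?_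
    exact le_iSup₂ (f := fun i (_ : i ∈ Iio n) => MeasurableSpace.comap (Function.eval i) _) i
      (Finset.mem_range.1 hi) _ ⟨_, measurableSet_singleton (x i), rfl⟩
  have hindep := ProbabilityTheory.indep_iSup_of_disjoint
    (fun i => (measurable_pi_apply i).comap_le) (iIndep_comap_eval P)
    (Iio_disjoint_Ici (le_refl n))
  rw [ProbabilityTheory.Indep_iff _ _ _ |>.1 hindep _ _ hcylinder
      (measurableSet_iSup_comap_eval_preimage_shift_iterate n hB),
    ((measurePreserving_shift P).iterate n).measure_preimage hB.nullMeasurableSet]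

theorem infinitePi_cylinder [MeasurableSingletonClass α] (x : ℕ → α) (n : ℕ) :
    Measure.infinitePi (fun _ : ℕ => P) (PiNat.cylinder x n) =
      ∏ i ∈ Finset.range n, P {x i} := by
  rw [PiNat.cylinder_eq_pi]
  exact Measure.infinitePi_pi _ fun i _ => measurableSet_singleton (x i)

theorem isPiSystem_cylinder (β : ℕ → Type*) :
    IsPiSystem {s : Set (∀ i, β i) | ∃ x n, s = PiNat.cylinder x n} := by
  rintro _ ⟨x, m, rfl⟩ _ ⟨y, n, rfl⟩ ⟨z, hzx, hzy⟩
  rw [← PiNat.mem_cylinder_iff_eq.1 hzx, ← PiNat.mem_cylinder_iff_eq.1 hzy]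
  obtain hmn | hnm := le_total m n
  · exact ⟨z, n, inter_eq_right.2 (PiNat.cylinder_anti z hmn)⟩
  · exact ⟨z, m, inter_eq_left.2 (PiNat.cylinder_anti z hnm)⟩

theorem eq_infinitePi_of_cylinder [Countable α] [TopologicalSpace α] [DiscreteTopology α]
    [BorelSpace α] {ν : Measure (ℕ → α)}
    (hν : ∀ x n, ν (PiNat.cylinder x n) = ∏ i ∈ Finset.range n, P {x i}) :
    ν = Measure.infinitePi fun _ : ℕ => P := by
  have hborel : (inferInstance : MeasurableSpace (ℕ → α)) = MeasurableSpace.generateFrom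
      {s | ∃ x n, s = PiNat.cylinder (E := fun _ => α) x n} := by
    rw [← (PiNat.isTopologicalBasis_cylinders fun _ => α).borel_eq_generateFrom]
    exact BorelSpace.measurable_eq
  have hcylinder : ∀ x n, Measure.infinitePi (fun _ : ℕ => P) (PiNat.cylinder x n) =
      ν (PiNat.cylinder x n) := fun x n => by rw [hν, infinitePi_cylinder]
  obtain ⟨x⟩ : Nonempty (ℕ → α) := (Measure.infinitePi fun _ : ℕ => P).nonempty_of_neZero
  refine (ext_of_generate_finite _ hborel (isPiSystem_cylinder _) ?_ ?_).symm
  · rintro _ ⟨x, n, rfl⟩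
    exact hcylinder x n
  · rw [← PiNat.cylinder_zero x, hcylinder]

theorem exists_eq_infinitePi_of_prefix [Countable α] [TopologicalSpace α] [DiscreteTopology α]
    [BorelSpace α] {ν : Measure (ℕ → α)} [IsProbabilityMeasure ν] {p : α → ℝ≥0∞}
    (hν : ∀ (n : ℕ) (u : Fin n → α), ν {w | ∀ i : Fin n, w i = u i} = ∏ i, p (u i)) :
    ∃ P : Measure α, IsProbabilityMeasure P ∧ (∀ i, P {i} = p i) ∧
      ν = Measure.infinitePi fun _ : ℕ => P := by
  let P : Measure α := ν.map fun w => w 0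
  have hP_prob : IsProbabilityMeasure P :=
    Measure.isProbabilityMeasure_map (measurable_pi_apply 0).aemeasurable
  have hP : ∀ i, P {i} = p i := fun i => by
    have hpreimage : (fun w : ℕ → α => w 0) ⁻¹' {i} = {w | ∀ j : Fin 1, w j = i} := by
      ext w
      simp
    rw [Measure.map_apply (measurable_pi_apply 0) (MeasurableSet.singleton i), hpreimage, hν,
      Fin.prod_univ_one]
  refine ⟨P, hP_prob, hP, eq_infinitePi_of_cylinder P fun x n => ?_⟩
  simp only [hP, Finset.prod_range, ← hν]
  congr 1 with w
  simp only [PiNat.cylinder, mem_ofPred_eq, Fin.forall_iff]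

end BernoulliShift

section LogIntegrability

variable {Ω : Type*} [MeasurableSpace Ω] {μ : Measure Ω} {T : Ω → Ω} {C : Set Ω}

theorem setLIntegral_comp_eq_measure_mul_lintegral (hT : Measurable T) (hC : MeasurableSet C)
    (hindep : ∀ B, MeasurableSet B → μ (C ∩ T ⁻¹' B) = μ C * μ B) {Φ : Ω → ℝ≥0∞}
    (hΦ : Measurable Φ) : ∫⁻ x in C, Φ (T x) ∂μ = μ C * ∫⁻ x, Φ x ∂μ := by
  have hmap : (μ.restrict C).map T = μ C • μ := by
    ext B hB
    rw [Measure.map_apply hT hB, Measure.restrict_apply' hC, inter_comm, hindep B hB,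
      Measure.smul_apply, smul_eq_mul]
  rw [← lintegral_map hΦ hT, hmap, lintegral_smul_measure, smul_eq_mul]

theorem lintegral_eq_iSup_lintegral_min_natCast {Φ : Ω → ℝ≥0∞}
    (hΦ : Measurable Φ) : ∫⁻ x, Φ x ∂μ = ⨆ n : ℕ, ∫⁻ x, min (Φ x) n ∂μ := by
  rw [← lintegral_iSup (fun n => hΦ.min measurable_const)
    fun m n hmn x => min_le_min_left _ (Nat.cast_le.2 hmn)]
  simp_rw [← inf_iSup_eq, ENNReal.iSup_natCast, min_top_right]

variable [IsProbabilityMeasure μ]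

-- By independence `Φ ∘ T` has integral only `(1 - μ C) * ∫ Φ` outside `C`, so `∫ Φ` reproduces
-- itself with a factor less than one.
theorem measure_mul_lintegral_le_of_le_add_comp (hT : MeasurePreserving T μ μ)
    (hC : MeasurableSet C) (hindep : ∀ B, MeasurableSet B → μ (C ∩ T ⁻¹' B) = μ C * μ B)
    {Φ : Ω → ℝ≥0∞} (hΦ : Measurable Φ) (hΦ_fin : ∫⁻ x, Φ x ∂μ ≠ ∞) {A c : ℝ≥0∞}
    (hΦA : ∀ x, Φ x ≤ A + Φ (T x)) (hΦc : ∀ x ∈ C, Φ x ≤ c) :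
    μ C * ∫⁻ x, Φ x ∂μ ≤ c + A := by
  have hon : ∫⁻ x in C, Φ x ∂μ ≤ c :=
    (setLIntegral_mono measurable_const hΦc).trans (by
      rw [setLIntegral_const]; exact mul_le_of_le_one_right' prob_le_one)
  have hoff : ∫⁻ x in Cᶜ, Φ x ∂μ ≤ A + ∫⁻ x in Cᶜ, Φ (T x) ∂μ := by
    refine (lintegral_mono hΦA).trans ?_
    rw [lintegral_add_left measurable_const, setLIntegral_const]
    gcongr
    exact mul_le_of_le_one_right' prob_le_one
  refine (ENNReal.add_le_add_iff_right hΦ_fin).1 ?_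
  calc μ C * ∫⁻ x, Φ x ∂μ + ∫⁻ x, Φ x ∂μ
      = ∫⁻ x in C, Φ (T x) ∂μ + (∫⁻ x in C, Φ x ∂μ + ∫⁻ x in Cᶜ, Φ x ∂μ) := by
        rw [setLIntegral_comp_eq_measure_mul_lintegral hT.measurable hC hindep hΦ,
          lintegral_add_compl _ hC]
    _ ≤ ∫⁻ x in C, Φ (T x) ∂μ + (c + (A + ∫⁻ x in Cᶜ, Φ (T x) ∂μ)) := by gcongr
    _ = c + A + (∫⁻ x in C, Φ (T x) ∂μ + ∫⁻ x in Cᶜ, Φ (T x) ∂μ) := by ring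
    _ = c + A + ∫⁻ x, Φ x ∂μ := by rw [lintegral_add_compl _ hC, hT.lintegral_comp hΦ]

theorem lintegral_ne_top_of_le_add_comp (hT : MeasurePreserving T μ μ)
    (hC : MeasurableSet C) (hC₀ : μ C ≠ 0)
    (hindep : ∀ B, MeasurableSet B → μ (C ∩ T ⁻¹' B) = μ C * μ B)
    {Φ : Ω → ℝ≥0∞} (hΦ : Measurable Φ) {A c : ℝ≥0∞} (hA : A ≠ ∞) (hc : c ≠ ∞)
    (hΦA : ∀ x, Φ x ≤ A + Φ (T x)) (hΦc : ∀ x ∈ C, Φ x ≤ c) : ∫⁻ x, Φ x ∂μ ≠ ∞ := by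
  have htruncate (n : ℕ) : μ C * ∫⁻ x, min (Φ x) n ∂μ ≤ c + A := by
    refine measure_mul_lintegral_le_of_le_add_comp hT hC hindep (hΦ.min measurable_const)
      ?_ (fun x => ?_) fun x hx => (min_le_left _ _).trans (hΦc x hx)
    · exact ne_top_of_le_ne_top (b := (n : ℝ≥0∞) * μ univ) (by finiteness)
        ((lintegral_mono fun x => min_le_right _ _).trans_eq (lintegral_const _))
    · rw [← min_add_add_left]
      exact min_le_min (hΦA x) le_add_self
  have hbound : μ C * ∫⁻ x, Φ x ∂μ ≤ c + A := by
    rw [lintegral_eq_iSup_lintegral_min_natCast hΦ, ENNReal.mul_iSup]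
    exact iSup_le htruncate
  intro htop
  rw [htop, ENNReal.mul_top hC₀, top_le_iff] at hbound
  exact ENNReal.add_ne_top.2 ⟨hc, hA⟩ hbound

theorem ae_pos_and_integrable_log_of_lintegral_ne_top {h : Ω → ℝ} (hh : Measurable h) {H : ℝ}
    (hH : ∀ x, h x ≤ H)
    (hfin : ∫⁻ x, (ENNReal.log (ENNReal.ofReal (h x))⁻¹).toENNReal ∂μ ≠ ∞) :
    (∀ᵐ x ∂μ, 0 < h x) ∧ Integrable (fun x => Real.log (h x)) μ := by
  have hmeas : Measurable fun x => (ENNReal.log (ENNReal.ofReal (h x))⁻¹).toENNReal :=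
    hh.ennreal_ofReal.inv.ennreal_log.ereal_toENNReal
  have hpos : ∀ᵐ x ∂μ, 0 < h x := by
    filter_upwards [ae_lt_top hmeas hfin] with x hx
    by_contra! hle
    simp [ENNReal.ofReal_of_nonpos hle] at hx
  refine ⟨hpos, ?_⟩
  have hdom : Integrable (fun x =>
      (ENNReal.log (ENNReal.ofReal (h x))⁻¹).toENNReal.toReal + |Real.log H|) μ :=
    (integrable_toReal_of_lintegral_ne_top hmeas.aemeasurable hfin).add (integrable_const _)
  refine hdom.mono' hh.log.aestronglyMeasurable ?_
  filter_upwards [hpos] with x hx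
  rw [ENNReal.log_inv, ENNReal.log_ofReal_of_pos hx, ← EReal.coe_neg,
    EReal.real_coe_toENNReal, ENNReal.toReal_ofReal', Real.norm_eq_abs, abs_le']
  have hlog_le := (Real.log_le_log hx (hH x)).trans (le_abs_self _)
  have habs := abs_nonneg (Real.log H)
  have hmax := le_max_left (-Real.log (h x)) 0
  have hmax' := le_max_right (-Real.log (h x)) 0
  constructor <;> linarith

theorem ae_pos_and_integrable_log_of_mul_comp_le (hT : MeasurePreserving T μ μ)
    (hC : MeasurableSet C) (hC₀ : μ C ≠ 0)
    (hindep : ∀ B, MeasurableSet B → μ (C ∩ T ⁻¹' B) = μ C * μ B)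
    {h : Ω → ℝ} (hh : Measurable h) {H : ℝ} (hH : ∀ x, h x ≤ H) {q : ℝ} (hq : 0 < q)
    (hqh : ∀ x, q * h (T x) ≤ h x) {c : ℝ} (hc : 0 < c) (hch : ∀ x ∈ C, c ≤ h x) :
    (∀ᵐ x ∂μ, 0 < h x) ∧ Integrable (fun x => Real.log (h x)) μ := by
  have hlog_ne_top {t : ℝ} (ht : 0 < t) :
      (ENNReal.log (ENNReal.ofReal t)⁻¹).toENNReal ≠ ∞ := by
    simp [ENNReal.log_inv, ENNReal.log_ofReal_of_pos ht, ← EReal.coe_neg]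
  have hlog_anti {s t : ℝ} (hst : s ≤ t) : (ENNReal.log (ENNReal.ofReal t)⁻¹).toENNReal ≤
      (ENNReal.log (ENNReal.ofReal s)⁻¹).toENNReal :=
    EReal.toENNReal_le_toENNReal
      (ENNReal.log_monotone (ENNReal.inv_le_inv' (ENNReal.ofReal_le_ofReal hst)))
  refine ae_pos_and_integrable_log_of_lintegral_ne_top hh hH
    (lintegral_ne_top_of_le_add_comp hT hC hC₀ hindep
      hh.ennreal_ofReal.inv.ennreal_log.ereal_toENNReal
      (hlog_ne_top hq) (hlog_ne_top hc) (fun x => ?_) fun x hx => hlog_anti (hch x hx))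
  calc (ENNReal.log (ENNReal.ofReal (h x))⁻¹).toENNReal
      ≤ (ENNReal.log (ENNReal.ofReal (q * h (T x)))⁻¹).toENNReal := hlog_anti (hqh x)
    _ = (ENNReal.log (ENNReal.ofReal q)⁻¹ +
          ENNReal.log (ENNReal.ofReal (h (T x)))⁻¹).toENNReal := by
        rw [ENNReal.ofReal_mul hq.le, ENNReal.mul_inv (Or.inr ENNReal.ofReal_ne_top)
          (Or.inl ENNReal.ofReal_ne_top), ENNReal.log_mul_add]
    _ ≤ _ := EReal.toENNReal_add_le

end LogIntegrability

section MonotoneSampling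

theorem tendsto_comp_succ_div_natCast {u : ℕ → ℝ} {L : ℝ}
    (hu : Tendsto (fun n : ℕ => u n / n) atTop (𝓝 L)) :
    Tendsto (fun n : ℕ => u (n + 1) / n) atTop (𝓝 L) := by
  have hratio : Tendsto (fun n : ℕ => ((n + 1 : ℕ) : ℝ) / n) atTop (𝓝 1) := by
    simpa using (tendsto_natCast_div_add_atTop (1 : ℝ)).inv₀ one_ne_zero
  have hmul := (hu.comp (tendsto_add_atTop_nat 1)).mul hratio
  rw [mul_one] at hmul
  refine hmul.congr fun n => ?_
  have hn : ((n + 1 : ℕ) : ℝ) ≠ 0 := by positivity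
  exact div_mul_div_cancel₀ hn

theorem tendsto_div_of_div_natCast {u v : ℕ → ℝ} {U V : ℝ} (hV : V ≠ 0)
    (hu : Tendsto (fun n : ℕ => u n / n) atTop (𝓝 U))
    (hv : Tendsto (fun n : ℕ => v n / n) atTop (𝓝 V)) :
    Tendsto (fun n => u n / v n) atTop (𝓝 (U / V)) := by
  refine (hu.div hv hV).congr' ?_
  filter_upwards [eventually_ne_atTop 0] with n hn
  exact div_div_div_cancel_right₀ (Nat.cast_ne_zero.2 hn) _ _

theorem exists_index_tendsto_atTop {a : ℕ → ℝ} (ha : Monotone a) (ha_top : Tendsto a atTop atTop) :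
    ∃ k : ℝ → ℕ, Tendsto k atTop atTop ∧ ∀ᶠ s in atTop, s ∈ Ico (a (k s)) (a (k s + 1)) := by
  have hexists : ∀ s, a 0 ≤ s → ∃ k, s ∈ Ico (a k) (a (k + 1)) := fun s hs => by
    have hcover := iUnion_Ico_map_succ_eq_Ici (f := a) (fun n => ha bot_le)
      (not_bddAbove_of_tendsto_atTop ha_top)
    exact mem_iUnion.1 (hcover.ge hs)
  choose! k hk using hexists
  refine ⟨k, tendsto_atTop.2 fun n => ?_, (eventually_ge_atTop (a 0)).mono hk⟩
  filter_upwards [eventually_ge_atTop (a 0), eventually_ge_atTop (a n)] with s hs₀ hsn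
  by_contra! hlt
  exact (hk s hs₀).2.not_ge ((ha (Nat.succ_le_of_lt hlt)).trans hsn)

theorem tendsto_div_atTop_of_monotone_of_tendsto_comp {a : ℕ → ℝ} (ha : Monotone a) {f : ℝ → ℝ}
    (hf : Monotone f) (hf₀ : ∀ s, 0 ≤ f s) {L I : ℝ} (hL : 0 < L)
    (haL : Tendsto (fun n : ℕ => a n / n) atTop (𝓝 L))
    (hfI : Tendsto (fun n : ℕ => f (a n) / n) atTop (𝓝 I)) :
    Tendsto (fun s => f s / s) atTop (𝓝 (I / L)) := by
  have ha_top : Tendsto a atTop atTop := by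
    refine (haL.pos_mul_atTop hL tendsto_natCast_atTop_atTop).congr' ?_
    filter_upwards [eventually_ne_atTop 0] with n hn
    exact div_mul_cancel₀ _ (Nat.cast_ne_zero.2 hn)
  obtain ⟨k, hk, hks⟩ := exists_index_tendsto_atTop ha ha_top
  have hlower := tendsto_div_of_div_natCast hL.ne' hfI (tendsto_comp_succ_div_natCast haL)
  have hupper := tendsto_div_of_div_natCast hL.ne'
    (tendsto_comp_succ_div_natCast (u := fun n => f (a n)) hfI) haL
  have hpos : ∀ᶠ s in atTop, 0 < a (k s) := hk.eventually (ha_top.eventually_gt_atTop 0)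
  refine tendsto_of_tendsto_of_tendsto_of_le_of_le' (hlower.comp hk) (hupper.comp hk) ?_ ?_
  · filter_upwards [hks, hpos] with s hs hak
    exact div_le_div₀ (hf₀ _) (hf hs.1) (hak.trans_le hs.1) hs.2.le
  · filter_upwards [hks, hpos] with s hs hak
    exact div_le_div₀ (hf₀ _) (hf hs.2.le) hak hs.1

theorem tendsto_inv_log_inv_mul_of_antitone {δ : ℕ → ℝ} (hδ : Antitone δ) (hδ₀ : ∀ n, 0 < δ n)
    {G : ℝ → ℝ} (hG : AntitoneOn G (Ioi 0)) (hG₀ : ∀ t, 0 < t → 0 ≤ G t) {L I : ℝ} (hL : 0 < L)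
    (hδL : Tendsto (fun n : ℕ => Real.log (δ n)⁻¹ / n) atTop (𝓝 L))
    (hGI : Tendsto (fun n : ℕ => G (δ n) / n) atTop (𝓝 I)) :
    Tendsto (fun t => (Real.log t⁻¹)⁻¹ * G t) (𝓝[>] 0) (𝓝 (L⁻¹ * I)) := by
  have hexp_log {t : ℝ} (ht : 0 < t) : Real.exp (-Real.log t⁻¹) = t := by
    rw [Real.log_inv, neg_neg, Real.exp_log ht]
  have hlog_top : Tendsto (fun t : ℝ => Real.log t⁻¹) (𝓝[>] 0) atTop :=
    Real.tendsto_log_atTop.comp tendsto_inv_nhdsGT_zero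
  have hlim : Tendsto (fun s => G (Real.exp (-s)) / s) atTop (𝓝 (I / L)) := by
    refine tendsto_div_atTop_of_monotone_of_tendsto_comp (a := fun n => Real.log (δ n)⁻¹)
      (fun m n hmn => Real.log_le_log (inv_pos.2 (hδ₀ m)) (inv_anti₀ (hδ₀ n) (hδ hmn)))
      (fun s t hst => hG (Real.exp_pos _) (Real.exp_pos _)
        (Real.exp_le_exp.2 (neg_le_neg hst)))
      (fun s => hG₀ _ (Real.exp_pos _)) hL hδL ?_
    simpa only [hexp_log (hδ₀ _)] using hGI
  rw [← div_eq_inv_mul]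
  refine (hlim.comp hlog_top).congr' ?_
  filter_upwards [self_mem_nhdsWithin] with t ht
  rw [Function.comp_apply, hexp_log ht, div_eq_inv_mul]

end MonotoneSampling

section LogIntegral

/-- The integral of `k` over the window `(s, t]` against the scale-invariant measure `dε / ε`. -/
noncomputable def logIntegral (k : ℝ → ℝ) (s t : ℝ) : ℝ :=
  ∫ ε in Ioc s t, k ε * ε⁻¹

variable {k : ℝ → ℝ} {C s t u : ℝ}

theorem logIntegral_self (k : ℝ → ℝ) (s : ℝ) : logIntegral k s s = 0 := by
  rw [logIntegral, Ioc_self, setIntegral_empty]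

theorem logIntegral_congr {l : ℝ → ℝ} (h : EqOn k l (Ioc s t)) :
    logIntegral k s t = logIntegral l s t :=
  setIntegral_congr_fun measurableSet_Ioc fun ε hε => by simp only [h hε]

theorem logIntegral_comp_div {c : ℝ} (hc : 0 < c) (hst : s ≤ t) :
    logIntegral (fun ε => k (ε / c)) (c * s) (c * t) = logIntegral k s t := by
  have hscale : ∀ ε, k (ε / c) * ε⁻¹ = c⁻¹ * (k (ε / c) * (ε / c)⁻¹) := fun ε => by
    rw [inv_div]; field_simp
  simp only [logIntegral, hscale]
  rw [← intervalIntegral.integral_of_le (mul_le_mul_of_nonneg_left hst hc.le),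
    ← intervalIntegral.integral_of_le hst, intervalIntegral.integral_const_mul,
    intervalIntegral.integral_comp_div (fun ε => k ε * ε⁻¹) hc.ne', smul_eq_mul,
    inv_mul_cancel_left₀ hc.ne', mul_div_cancel_left₀ _ hc.ne', mul_div_cancel_left₀ _ hc.ne']

theorem integrableOn_const_mul_inv_Ioc (C : ℝ) (hs : 0 < s) (hst : s ≤ t) :
    IntegrableOn (fun ε => C * ε⁻¹) (Ioc s t) := by
  refine (intervalIntegrable_iff_integrableOn_Ioc_of_le hst).1
    (IntervalIntegrable.const_mul (intervalIntegral.intervalIntegrable_inv (f := fun ε => ε)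
      (fun ε hε => ?_) continuousOn_id) C)
  rw [uIcc_of_le hst] at hε
  exact (hs.trans_le hε.1).ne'

theorem logIntegral_nonneg (hk₀ : ∀ ε, 0 < ε → 0 ≤ k ε) (hs : 0 ≤ s) : 0 ≤ logIntegral k s t :=
  setIntegral_nonneg measurableSet_Ioc fun ε hε =>
    mul_nonneg (hk₀ ε (hs.trans_lt hε.1)) (inv_nonneg.2 (hs.trans hε.1.le))

theorem integrableOn_mul_inv_Ioc (hk : Measurable k) (hk₀ : ∀ ε, 0 < ε → 0 ≤ k ε)
    (hkC : ∀ ε, 0 < ε → k ε ≤ C) (hs : 0 < s) :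
    IntegrableOn (fun ε => k ε * ε⁻¹) (Ioc s t) := by
  obtain hts | hst := le_total t s
  · rw [Ioc_eq_empty hts.not_gt]
    exact integrableOn_empty
  refine (integrableOn_const_mul_inv_Ioc C hs hst).mono'
    (hk.mul measurable_inv).aestronglyMeasurable
    ((ae_restrict_iff' measurableSet_Ioc).2 (ae_of_all _ fun ε hε => ?_))
  have hε₀ : 0 < ε := hs.trans hε.1
  rw [norm_mul, Real.norm_of_nonneg (hk₀ ε hε₀), Real.norm_of_nonneg (inv_nonneg.2 hε₀.le)]
  exact mul_le_mul_of_nonneg_right (hkC ε hε₀) (inv_nonneg.2 hε₀.le)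

theorem antitoneOn_logIntegral (hk : Measurable k) (hk₀ : ∀ ε, 0 < ε → 0 ≤ k ε)
    (hkC : ∀ ε, 0 < ε → k ε ≤ C) (t : ℝ) :
    AntitoneOn (fun s => logIntegral k s t) (Ioi 0) :=
  fun _ hs _ _ hsu => setIntegral_mono_set (integrableOn_mul_inv_Ioc hk hk₀ hkC hs)
    ((ae_restrict_iff' measurableSet_Ioc).2 (ae_of_all _ fun ε hε =>
      have hε₀ : 0 < ε := lt_trans hs hε.1
      mul_nonneg (hk₀ ε hε₀) (inv_nonneg.2 hε₀.le)))
    (Ioc_subset_Ioc_left hsu).eventuallyLE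

theorem logIntegral_add_logIntegral (hk : Measurable k) (hk₀ : ∀ ε, 0 < ε → 0 ≤ k ε)
    (hkC : ∀ ε, 0 < ε → k ε ≤ C) (hs : 0 < s) (hst : s ≤ t) (htu : t ≤ u) :
    logIntegral k s t + logIntegral k t u = logIntegral k s u := by
  simp only [logIntegral]
  rw [← Ioc_union_Ioc_eq_Ioc hst htu, setIntegral_union (Ioc_disjoint_Ioc_of_le le_rfl)
    measurableSet_Ioc (integrableOn_mul_inv_Ioc hk hk₀ hkC hs)
    (integrableOn_mul_inv_Ioc hk hk₀ hkC (hs.trans_le hst))]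

theorem logIntegral_le (hk : Measurable k) (hk₀ : ∀ ε, 0 < ε → 0 ≤ k ε)
    (hkC : ∀ ε, 0 < ε → k ε ≤ C) (hs : 0 < s) (hst : s ≤ t) :
    logIntegral k s t ≤ C * (Real.log t - Real.log s) := by
  have ht : 0 < t := hs.trans_le hst
  calc logIntegral k s t ≤ ∫ ε in Ioc s t, C * ε⁻¹ :=
        setIntegral_mono_on (integrableOn_mul_inv_Ioc hk hk₀ hkC hs)
          (integrableOn_const_mul_inv_Ioc C hs hst) measurableSet_Ioc fun ε hε =>
          mul_le_mul_of_nonneg_right (hkC ε (hs.trans hε.1)) (inv_nonneg.2 (hs.trans hε.1).le)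
    _ = C * (Real.log t - Real.log s) := by
        rw [← intervalIntegral.integral_of_le hst, intervalIntegral.integral_const_mul,
          integral_inv_of_pos hs ht, Real.log_div ht.ne' hs.ne']

end LogIntegral

section ScaleCocycle

variable {X : Type*} {T : X → X} {ρ h : X → ℝ} {x : X}

/-- The `n`-th scale `ρ x * ρ (T x) * ⋯ * ρ (T^[n-1] x) * h (T^[n] x)` seen along the orbit of
`x`. -/
def orbitScale (T : X → X) (ρ h : X → ℝ) : ℕ → X → ℝ
  | 0 => h
  | n + 1 => fun x => ρ x * orbitScale T ρ h n (T x)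

theorem orbitScale_pos (hρ : ∀ x, 0 < ρ x) (hx : ∀ m, 0 < h (T^[m] x)) (n : ℕ) :
    0 < orbitScale T ρ h n x := by
  induction n generalizing x with
  | zero => exact hx 0
  | succ n ih => exact mul_pos (hρ x) (ih fun m => hx (m + 1))

theorem antitone_orbitScale (hρ : ∀ x, 0 < ρ x) (hρh : ∀ x, ρ x * h (T x) ≤ h x) (x : X) :
    Antitone fun n => orbitScale T ρ h n x := by
  refine antitone_nat_of_succ_le fun n => ?_
  induction n generalizing x with
  | zero => exact hρh x
  | succ n ih => exact mul_le_mul_of_nonneg_left (ih (T x)) (hρ x).le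

theorem log_orbitScale (hρ : ∀ x, 0 < ρ x) (hx : ∀ m, 0 < h (T^[m] x)) (n : ℕ) :
    Real.log (orbitScale T ρ h n x) =
      Real.log (h x) - birkhoffSum T (fun y => Real.log (h y) - Real.log (ρ y * h (T y))) n x := by
  induction n generalizing x with
  | zero => simp only [orbitScale, birkhoffSum_zero, sub_zero]
  | succ n ih =>
    have hTx : ∀ m, 0 < h (T^[m] (T x)) := fun m => hx (m + 1)
    have hhTx : h (T x) ≠ 0 := (hTx 0).ne'
    rw [orbitScale, Real.log_mul (hρ x).ne' (orbitScale_pos hρ hTx n).ne', ih hTx,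
      birkhoffSum_succ', Real.log_mul (hρ x).ne' hhTx]
    ring

theorem logIntegral_orbitScale {κ : X → ℝ → ℝ} {C : ℝ} (hκ : ∀ x, Measurable (κ x))
    (hκ₀ : ∀ x ε, 0 < ε → 0 ≤ κ x ε) (hκC : ∀ x ε, 0 < ε → κ x ε ≤ C) (hρ : ∀ x, 0 < ρ x)
    (hρh : ∀ x, ρ x * h (T x) ≤ h x)
    (hκρ : ∀ x ε, 0 < ε → ε ≤ ρ x * h (T x) → κ x ε = κ (T x) (ε / ρ x))
    (hx : ∀ m, 0 < h (T^[m] x)) (n : ℕ) :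
    logIntegral (κ x) (orbitScale T ρ h n x) (h x) =
      birkhoffSum T (fun y => logIntegral (κ y) (ρ y * h (T y)) (h y)) n x := by
  induction n generalizing x with
  | zero => rw [orbitScale, logIntegral_self, birkhoffSum_zero]
  | succ n ih =>
    have hTx : ∀ m, 0 < h (T^[m] (T x)) := fun m => hx (m + 1)
    have hpos : 0 < orbitScale T ρ h n (T x) := orbitScale_pos hρ hTx n
    have hle : orbitScale T ρ h n (T x) ≤ h (T x) :=
      antitone_orbitScale hρ hρh (T x) (Nat.zero_le n)
    have hpos' : 0 < ρ x * orbitScale T ρ h n (T x) := mul_pos (hρ x) hpos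
    rw [orbitScale, birkhoffSum_succ', ← ih hTx, ← logIntegral_add_logIntegral (hκ x) (hκ₀ x)
      (hκC x) hpos' (mul_le_mul_of_nonneg_left hle (hρ x).le) (hρh x), add_comm,
      logIntegral_congr fun ε hε => hκρ x ε (hpos'.trans hε.1) hε.2,
      logIntegral_comp_div (hρ x) hle]

end ScaleCocycle

section ErgodicLogAverage

variable {X : Type*} [MeasurableSpace X] {μ : Measure X} {T : X → X} {ρ h : X → ℝ}

theorem ae_forall_iterate_of_measurePreserving (hT : MeasurePreserving T μ μ) {p : X → Prop}
    (hp : ∀ᵐ x ∂μ, p x) : ∀ᵐ x ∂μ, ∀ n, p (T^[n] x) :=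
  ae_all_iff.2 fun n => (hT.iterate n).quasiMeasurePreserving.ae hp

theorem log_sub_log_mul_comp_ae_eq (hT : MeasurePreserving T μ μ) (hρ : ∀ x, 0 < ρ x)
    (hh₀ : ∀ᵐ x ∂μ, 0 < h x) :
    (fun x => Real.log (h x) - Real.log (ρ x * h (T x))) =ᵐ[μ]
      fun x => Real.log (h x) - Real.log (h (T x)) + Real.log (ρ x)⁻¹ := by
  filter_upwards [hT.quasiMeasurePreserving.ae hh₀] with x hTx
  rw [Real.log_mul (hρ x).ne' hTx.ne', Real.log_inv]
  ring

theorem integrable_log_sub_log_mul_comp (hT : MeasurePreserving T μ μ) (hρ : ∀ x, 0 < ρ x)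
    (hρ_int : Integrable (fun x => Real.log (ρ x)⁻¹) μ) (hh₀ : ∀ᵐ x ∂μ, 0 < h x)
    (hh_int : Integrable (fun x => Real.log (h x)) μ) :
    Integrable (fun x => Real.log (h x) - Real.log (ρ x * h (T x))) μ :=
  ((hh_int.sub (hT.integrable_comp_of_integrable hh_int)).add hρ_int).congr
    (log_sub_log_mul_comp_ae_eq hT hρ hh₀).symm

theorem integral_log_sub_log_mul_comp (hT : MeasurePreserving T μ μ) (hρ : ∀ x, 0 < ρ x)
    (hρ_int : Integrable (fun x => Real.log (ρ x)⁻¹) μ) (hh₀ : ∀ᵐ x ∂μ, 0 < h x)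
    (hh_int : Integrable (fun x => Real.log (h x)) μ) :
    ∫ x, (Real.log (h x) - Real.log (ρ x * h (T x))) ∂μ = ∫ x, Real.log (ρ x)⁻¹ ∂μ := by
  have hcomp : Integrable (fun x => Real.log (h (T x))) μ :=
    hT.integrable_comp_of_integrable hh_int
  have hsub : Integrable (fun x => Real.log (h x) - Real.log (h (T x))) μ := hh_int.sub hcomp
  have hinvariant : ∫ x, Real.log (h (T x)) ∂μ = ∫ x, Real.log (h x) ∂μ := by
    rw [← integral_map (f := fun x => Real.log (h x)) hT.aemeasurable
      (by rw [hT.map_eq]; exact hh_int.aestronglyMeasurable), hT.map_eq]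
  rw [integral_congr_ae (log_sub_log_mul_comp_ae_eq hT hρ hh₀),
    integral_add hsub hρ_int, integral_sub hh_int hcomp, hinvariant, sub_self,
    zero_add]

theorem measurable_logIntegral {κ : X → ℝ → ℝ} (hκ : Measurable (Function.uncurry κ))
    {s t : X → ℝ} (hs : Measurable s) (ht : Measurable t) :
    Measurable fun x => logIntegral (κ x) (s x) (t x) := by
  let W : Set (X × ℝ) := {p | p.2 ∈ Ioc (s p.1) (t p.1)}
  have hW : MeasurableSet W :=
    (measurableSet_lt (hs.comp measurable_fst) measurable_snd).inter
      (measurableSet_le measurable_snd (ht.comp measurable_fst))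
  have hindicator : StronglyMeasurable (W.indicator fun p => κ p.1 p.2 * p.2⁻¹) :=
    ((hκ.mul measurable_snd.inv).indicator hW).stronglyMeasurable
  convert (hindicator.integral_prod_right' (ν := (volume : Measure ℝ))).measurable using 2 with x
  exact (integral_indicator measurableSet_Ioc).symm

theorem integrable_logIntegral (hT : MeasurePreserving T μ μ) (hρ_meas : Measurable ρ)
    (hρ : ∀ x, 0 < ρ x) (hρ_int : Integrable (fun x => Real.log (ρ x)⁻¹) μ)
    (hh : Measurable h) (hh₀ : ∀ᵐ x ∂μ, 0 < h x)
    (hh_int : Integrable (fun x => Real.log (h x)) μ) (hρh : ∀ x, ρ x * h (T x) ≤ h x)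
    {κ : X → ℝ → ℝ} {C : ℝ} (hκ : Measurable (Function.uncurry κ))
    (hκ₀ : ∀ x ε, 0 < ε → 0 ≤ κ x ε) (hκC : ∀ x ε, 0 < ε → κ x ε ≤ C) :
    Integrable (fun x => logIntegral (κ x) (ρ x * h (T x)) (h x)) μ := by
  refine ((integrable_log_sub_log_mul_comp hT hρ hρ_int hh₀ hh_int).const_mul C).mono'
    (measurable_logIntegral hκ (hρ_meas.mul (hh.comp hT.measurable)) hh).aestronglyMeasurable ?_
  filter_upwards [hT.quasiMeasurePreserving.ae hh₀] with x hTx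
  have hpos : 0 < ρ x * h (T x) := mul_pos (hρ x) hTx
  rw [Real.norm_of_nonneg (logIntegral_nonneg (hκ₀ x) hpos.le)]
  exact logIntegral_le (hκ.comp measurable_prodMk_left) (hκ₀ x) (hκC x) hpos (hρh x)

theorem ae_tendsto_inv_log_inv_mul_logIntegral [IsProbabilityMeasure μ] (hT : Ergodic T μ)
    (hρ_meas : Measurable ρ) (hρ : ∀ x, 0 < ρ x)
    (hρ_int : Integrable (fun x => Real.log (ρ x)⁻¹) μ)
    (hρ_mean : 0 < ∫ x, Real.log (ρ x)⁻¹ ∂μ) (hh : Measurable h) (hh₀ : ∀ᵐ x ∂μ, 0 < h x)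
    (hh_int : Integrable (fun x => Real.log (h x)) μ) (hρh : ∀ x, ρ x * h (T x) ≤ h x)
    {κ : X → ℝ → ℝ} {C : ℝ} (hκ : Measurable (Function.uncurry κ))
    (hκ₀ : ∀ x ε, 0 < ε → 0 ≤ κ x ε) (hκC : ∀ x ε, 0 < ε → κ x ε ≤ C)
    (hκρ : ∀ x ε, 0 < ε → ε ≤ ρ x * h (T x) → κ x ε = κ (T x) (ε / ρ x)) :
    ∀ᵐ x ∂μ, Tendsto (fun δ => (Real.log δ⁻¹)⁻¹ * logIntegral (κ x) δ (h x)) (𝓝[>] 0)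
      (𝓝 ((∫ x, Real.log (ρ x)⁻¹ ∂μ)⁻¹ *
        ∫ x, logIntegral (κ x) (ρ x * h (T x)) (h x) ∂μ)) := by
  have hTm : MeasurePreserving T μ μ := hT.toMeasurePreserving
  have hκx : ∀ x, Measurable (κ x) := fun x => hκ.comp measurable_prodMk_left
  filter_upwards [ae_forall_iterate_of_measurePreserving hTm hh₀,
    ae_tendsto_birkhoffSum_div hT (integrable_log_sub_log_mul_comp hTm hρ hρ_int hh₀ hh_int),
    ae_tendsto_birkhoffSum_div hT (integrable_logIntegral hTm hρ_meas hρ hρ_int hh hh₀ hh_int hρh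
      hκ hκ₀ hκC)] with x hx hlog hlogIntegral
  rw [integral_log_sub_log_mul_comp hTm hρ hρ_int hh₀ hh_int] at hlog
  refine tendsto_inv_log_inv_mul_of_antitone (antitone_orbitScale hρ hρh x)
    (orbitScale_pos hρ hx) (antitoneOn_logIntegral (hκx x) (hκ₀ x) (hκC x) (h x))
    (fun t ht => logIntegral_nonneg (hκ₀ x) ht.le) hρ_mean ?_ ?_
  · have hshifted := (tendsto_const_div_atTop_nhds_zero_nat (-Real.log (h x))).add hlog
    rw [zero_add] at hshifted
    refine hshifted.congr fun n => ?_
    rw [Real.log_inv, log_orbitScale hρ hx, neg_sub', sub_neg_eq_add, add_div]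
  · simpa only [logIntegral_orbitScale hκx hκ₀ hκC hρ hρh hκρ hx] using hlogIntegral

end ErgodicLogAverage

section CodingMap

/-- The defining relation `π(w) = S_{w₀}(π(shift w))` of the coding map of an iterated function
system `S`; among maps with bounded range it determines `π` when `S` is contracting. -/
def IsCodingMap {X ι : Type*} (S : ι → X → X) (π : (ℕ → ι) → X) : Prop :=
  ∀ w, π w = S (w 0) (π (shift w))

namespace IsCodingMap

theorem mapsTo_range {X ι : Type*} {S : ι → X → X} {π : (ℕ → ι) → X} (hπ : IsCodingMap S π)
    (i : ι) : MapsTo (S i) (range π) (range π) := by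
  rintro _ ⟨w, rfl⟩
  exact ⟨fun n => Nat.casesOn n i w, hπ _⟩

theorem subset_range {X ι : Type*} [MetricSpace X] [Finite ι] [Nonempty ι]
    [TopologicalSpace ι] {S : ι → X → X} {π : (ℕ → ι) → X} (hπ : IsCodingMap S π)
    (hπ_cont : Continuous π) {K : ℝ≥0} (hK : K < 1) (hS : ∀ i, LipschitzWith K (S i)) {F : Set X}
    (hF : IsCompact F) (hF_sub : F ⊆ ⋃ i, S i '' F) : F ⊆ range π :=
  subset_of_subset_iUnion_image_of_contracting (fun _ => hK) hS hF hF_sub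
    (isCompact_range hπ_cont).isClosed (range_nonempty π) hπ.mapsTo_range

variable {X ι : Type*} [PseudoMetricSpace X] {S : ι → X → X} {π : (ℕ → ι) → X} {K : ℝ≥0}

theorem dist_le_of_mem_cylinder (hπ : IsCodingMap S π) (hS : ∀ i, LipschitzWith K (S i))
    (hbdd : Bornology.IsBounded (range π)) {v w : ℕ → ι} {n : ℕ} (hvw : v ∈ PiNat.cylinder w n) :
    dist (π v) (π w) ≤ K ^ n * diam (range π) := by
  induction n generalizing v w with
  | zero =>
    rw [pow_zero, one_mul]
    exact dist_le_diam_of_mem hbdd (mem_range_self v) (mem_range_self w)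
  | succ n ih =>
    have hhead : v 0 = w 0 := hvw 0 n.succ_pos
    have htail : shift v ∈ PiNat.cylinder (shift w) n := fun i hi => hvw (i + 1) (by omega)
    rw [hπ v, hπ w, hhead, pow_succ', mul_assoc]
    exact ((hS (w 0)).dist_le_mul _ _).trans (mul_le_mul_of_nonneg_left (ih htail) K.coe_nonneg)

variable [TopologicalSpace ι] [DiscreteTopology ι]

protected theorem continuous (hπ : IsCodingMap S π) (hK : K < 1)
    (hS : ∀ i, LipschitzWith K (S i)) (hbdd : Bornology.IsBounded (range π)) :
    Continuous π := by
  have hzero : Tendsto (fun n => (K : ℝ) ^ n * diam (range π)) atTop (𝓝 0) := by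
    simpa using (tendsto_pow_atTop_nhds_zero_of_lt_one K.coe_nonneg
      (NNReal.coe_lt_one.2 hK)).mul_const (diam (range π))
  refine continuous_iff_continuousAt.2 fun w => Metric.tendsto_nhds.2 fun ε hε => ?_
  obtain ⟨n, hn⟩ := (hzero.eventually_lt_const hε).exists
  filter_upwards [(PiNat.isOpen_cylinder _ w n).mem_nhds (PiNat.self_mem_cylinder w n)] with v hv
  exact (hπ.dist_le_of_mem_cylinder hS hbdd hv).trans_lt hn

end IsCodingMap

end CodingMap

section BernoulliLogIntegrability

theorem pow_mul_comp_iterate_le {X : Type*} {T : X → X} {h : X → ℝ} {q : ℝ} (hq : 0 ≤ q)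
    (hqh : ∀ x, q * h (T x) ≤ h x) (n : ℕ) (x : X) : q ^ n * h (T^[n] x) ≤ h x := by
  induction n generalizing x with
  | zero => simp
  | succ n ih =>
    rw [pow_succ', mul_assoc]
    exact (mul_le_mul_of_nonneg_left (ih (T x)) hq).trans (hqh x)

variable {ι : Type*} [MeasurableSpace ι] (P : Measure ι) [IsProbabilityMeasure P]

theorem integral_comp_eval_zero_infinitePi [Fintype ι] [MeasurableSingletonClass ι] (f : ι → ℝ) :
    ∫ w, f (w 0) ∂(Measure.infinitePi fun _ : ℕ => P) = ∑ i, P.real {i} * f i := by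
  rw [← integral_map (φ := fun w : ℕ → ι => w 0) (measurable_pi_apply 0).aemeasurable
    (measurable_of_countable f).aestronglyMeasurable, Measure.infinitePi_map_eval,
    integral_fintype Integrable.of_finite]
  simp only [smul_eq_mul]

variable [Finite ι] [TopologicalSpace ι] [DiscreteTopology ι] [BorelSpace ι]

theorem ae_pos_and_integrable_log_infinitePi (hP : ∀ i, P {i} ≠ 0) {h : (ℕ → ι) → ℝ}
    (hh : Continuous h) {q : ℝ} (hq : 0 < q) (hqh : ∀ w, q * h (shift w) ≤ h w)
    {w : ℕ → ι} (hw : 0 < h w) :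
    (∀ᵐ v ∂(Measure.infinitePi fun _ : ℕ => P), 0 < h v) ∧
      Integrable (fun v => Real.log (h v)) (Measure.infinitePi fun _ : ℕ => P) := by
  obtain ⟨_, ⟨x, n, rfl⟩, -, hcyl⟩ :=
    (PiNat.isTopologicalBasis_cylinders fun _ : ℕ => ι).exists_subset_of_mem_open
      (mem_preimage.2 (mem_Ioi.2 (half_lt_self hw))) (isOpen_Ioi.preimage hh)
  obtain ⟨H, hH⟩ := (isCompact_range hh).bddAbove
  refine ae_pos_and_integrable_log_of_mul_comp_le ((measurePreserving_shift P).iterate n)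
    (PiNat.isOpen_cylinder _ x n).measurableSet ?_
    (fun B hB => infinitePi_cylinder_inter_preimage_shift_iterate P x n hB) hh.measurable
    (fun v => hH (mem_range_self v)) (pow_pos hq n) (pow_mul_comp_iterate_le hq.le hqh n)
    (half_pos hw) fun v hv => (hcyl hv).le
  rw [infinitePi_cylinder]
  exact Finset.prod_ne_zero_iff.2 fun i _ => hP (x i)

end BernoulliLogIntegrability

section SelfSimilarSets

theorem IsSimilarity.infDist_compl_image {X Y : Type*} [MetricSpace X] [MetricSpace Y] {r : ℝ}
    {f : X → Y} (hf : IsSimilarity r f) (hr : 0 < r) (hsurj : f.Surjective) (A : Set X) (x : X) :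
    infDist (f x) (f '' A)ᶜ = r * infDist x Aᶜ := by
  rw [← image_compl_eq ⟨(hf.antilipschitzWith hr).injective, hsurj⟩, hf.infDist_image hr]

theorem exists_lt_one_forall_lipschitzWith {X ι : Type*} [MetricSpace X] [Finite ι] [Nonempty ι]
    {S : ι → X → X} {r : ι → ℝ} (hr : ∀ i, r i < 1) (hS : ∀ i, IsSimilarity (r i) (S i)) :
    ∃ K : ℝ≥0, K < 1 ∧ ∀ i, LipschitzWith K (S i) := by
  obtain ⟨j, hj⟩ := Finite.exists_max r
  exact ⟨(r j).toNNReal, Real.toNNReal_lt_one.2 (hr j),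
    fun i => (hS i).lipschitzWith.weaken (Real.toNNReal_le_toNNReal (hj i))⟩

theorem sum_measureReal_mul_log_inv_pos {ι : Type*} [MeasurableSpace ι] [Fintype ι] [Nonempty ι]
    (P : Measure ι) [IsFiniteMeasure P] (hP : ∀ i, P {i} ≠ 0) {r : ι → ℝ}
    (hr : ∀ i, r i ∈ Ioo (0 : ℝ) 1) : 0 < ∑ i, P.real {i} * Real.log (r i)⁻¹ :=
  Finset.sum_pos (fun i _ => mul_pos (ENNReal.toReal_pos (hP i) (measure_ne_top P {i}))
    (Real.log_pos ((one_lt_inv₀ (hr i).1).2 (hr i).2))) Finset.univ_nonempty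

variable {E ι : Type*} [NormedAddCommGroup E] [InnerProductSpace ℝ E] [FiniteDimensional ℝ E]
  {S : ι → E → E} {r : ι → ℝ} {F J : Set E} {π : (ℕ → ι) → E}

theorem subset_closure_interior_of_mapsTo (hr : ∀ i, r i ∈ Ioo (0 : ℝ) 1)
    (hS : ∀ i, IsSimilarity (r i) (S i)) (hF : IsCompact F) (hF_self : F = ⋃ i, S i '' F)
    (hJ_maps : ∀ i, MapsTo (S i) J J) (hJ_ne : (interior J).Nonempty) :
    F ⊆ closure (interior J) := by
  refine subset_of_subset_iUnion_image_of_contracting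
    (fun i => Real.toNNReal_lt_one.2 (hr i).2) (fun i => (hS i).lipschitzWith) hF hF_self.subset
    isClosed_closure hJ_ne.closure fun i => ?_
  obtain ⟨e, he⟩ := (hS i).exists_homeomorph (hr i).1
  rw [← he]
  exact (e.isOpenMap.mapsTo_interior (he ▸ hJ_maps i)).closure e.continuous

theorem IsCodingMap.infDist_compl_image (hπ : IsCodingMap S π) (hr : ∀ i, 0 < r i)
    (hS : ∀ i, IsSimilarity (r i) (S i)) (J : Set E) (w : ℕ → ι) :
    infDist (π w) (S (w 0) '' J)ᶜ = r (w 0) * infDist (π (shift w)) Jᶜ := by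
  obtain ⟨e, he⟩ := (hS (w 0)).exists_homeomorph (hr (w 0))
  rw [hπ w, (hS (w 0)).infDist_compl_image (hr (w 0)) (he ▸ e.surjective)]

theorem IsCodingMap.mul_infDist_compl_div_le (hπ : IsCodingMap S π) (hr : ∀ i, 0 < r i)
    (hS : ∀ i, IsSimilarity (r i) (S i)) (hJ_univ : J ≠ univ) (hJ_maps : ∀ i, MapsTo (S i) J J)
    {b : ℝ} (hb : 0 ≤ b) (w : ℕ → ι) :
    r (w 0) * (infDist (π (shift w)) Jᶜ / b) ≤ infDist (π w) Jᶜ / b := by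
  rw [← mul_div_assoc, ← hπ.infDist_compl_image hr hS]
  exact div_le_div_of_nonneg_right (infDist_le_infDist_of_subset
    (compl_subset_compl.2 (hJ_maps (w 0)).image_subset) (nonempty_compl.2 hJ_univ)) hb

theorem IsCodingMap.surfaceDensity_eq [MeasurableSpace E] [BorelSpace E] [Nontrivial E]
    (hπ : IsCodingMap S π) (hr : ∀ i, 0 < r i)
    (hS : ∀ i, IsSimilarity (r i) (S i)) (hF_self : F = ⋃ i, S i '' F)
    (hFJ : F ⊆ closure (interior J))
    (hJ_disj : Pairwise fun i j => Disjoint (S i '' interior J) (S j '' interior J))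
    {a b ε : ℝ} (hab : a + 1 < b) (hb : 0 < b) (hε : 0 < ε) {w : ℕ → ι}
    (hεw : ε ≤ r (w 0) * (infDist (π (shift w)) Jᶜ / b)) :
    surfaceDensity F a ε (π w) = surfaceDensity F a (ε / r (w 0)) (π (shift w)) := by
  rw [hπ w]
  refine surfaceDensity_apply_of_pairwise_disjoint hr hS hF_self hFJ hJ_disj (w 0) hab hε ?_
  rw [← hπ w, hπ.infDist_compl_image hr hS]
  rwa [← mul_div_assoc, le_div_iff₀' hb] at hεw

variable [MeasurableSpace ι] [TopologicalSpace ι] [DiscreteTopology ι] [BorelSpace ι]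
  (P : Measure ι) [IsProbabilityMeasure P]

theorem IsCodingMap.ae_pos_and_integrable_log_infDist_compl_div [Finite ι]
    (hP : ∀ i, P {i} ≠ 0) (hπ : IsCodingMap S π) (hπ_cont : Continuous π) (hr : ∀ i, 0 < r i)
    (hS : ∀ i, IsSimilarity (r i) (S i)) (hJ_univ : J ≠ univ) (hJ_maps : ∀ i, MapsTo (S i) J J)
    (hπJ : (range π ∩ interior J).Nonempty) {b : ℝ} (hb : 0 < b) :
    (∀ᵐ w ∂(Measure.infinitePi fun _ : ℕ => P), 0 < infDist (π w) Jᶜ / b) ∧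
      Integrable (fun w => Real.log (infDist (π w) Jᶜ / b))
        (Measure.infinitePi fun _ : ℕ => P) := by
  have : Nonempty ι := P.nonempty_of_neZero
  obtain ⟨_, ⟨w, rfl⟩, hw⟩ := hπJ
  obtain ⟨i, hi⟩ := Finite.exists_min r
  have hw_pos : 0 < infDist (π w) Jᶜ :=
    (infDist_pos_iff_notMem_closure (nonempty_compl.2 hJ_univ)).1 (by
      rwa [closure_compl, notMem_compl_iff])
  refine ae_pos_and_integrable_log_infinitePi P hP
    (((continuous_infDist_pt Jᶜ).comp hπ_cont).div_const b) (hr i) (fun v => ?_)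
    (div_pos hw_pos hb)
  exact (mul_le_mul_of_nonneg_right (hi (v 0)) (div_nonneg infDist_nonneg hb.le)).trans
    (hπ.mul_infDist_compl_div_le hr hS hJ_univ hJ_maps hb.le v)

variable [MeasurableSpace E] [BorelSpace E] [Nontrivial E]

theorem statement4_general [Fintype ι] (hP : ∀ i, P {i} ≠ 0) (hr : ∀ i, r i ∈ Ioo (0 : ℝ) 1)
    (hS : ∀ i, IsSimilarity (r i) (S i)) (hF : IsCompact F) (hF_self : F = ⋃ i, S i '' F)
    (hJ_univ : J ≠ univ) (hJ_maps : ∀ i, MapsTo (S i) J J)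
    (hJ_disj : Pairwise fun i j => Disjoint (S i '' interior J) (S j '' interior J))
    (hSOSC : (F ∩ interior J).Nonempty) (hπ : IsCodingMap S π) (hπF : ∀ w, π w ∈ F)
    {a b : ℝ} (hab : a + 1 < b) (hb : 0 < b) :
    ∀ᵐ w ∂(Measure.infinitePi fun _ : ℕ => P),
      Tendsto (fun δ : ℝ => (Real.log δ⁻¹)⁻¹ *
          logIntegral (fun ε => surfaceDensity F a ε (π w)) δ (infDist (π w) Jᶜ / b))
        (𝓝[>] 0)
        (𝓝 ((∑ i, P.real {i} * Real.log (r i)⁻¹)⁻¹ *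
          ∫ v, logIntegral (fun ε => surfaceDensity F a ε (π v))
              (infDist (π v) (S (v 0) '' J)ᶜ / b) (infDist (π v) Jᶜ / b)
            ∂(Measure.infinitePi fun _ : ℕ => P))) := by
  have : Nonempty ι := P.nonempty_of_neZero
  have hr₀ : ∀ i, 0 < r i := fun i => (hr i).1
  obtain ⟨K, hK, hS_lip⟩ := exists_lt_one_forall_lipschitzWith (fun i => (hr i).2) hS
  have hπ_cont : Continuous π :=
    hπ.continuous hK hS_lip (hF.isBounded.subset (range_subset_iff.2 hπF))
  have hF_range : F ⊆ range π := hπ.subset_range hπ_cont hK hS_lip hF hF_self.subset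
  have hFJ : F ⊆ closure (interior J) :=
    subset_closure_interior_of_mapsTo hr hS hF hF_self hJ_maps (hSOSC.mono inter_subset_right)
  obtain ⟨hh₀, hh_int⟩ := hπ.ae_pos_and_integrable_log_infDist_compl_div P hP hπ_cont hr₀ hS
    hJ_univ hJ_maps (hSOSC.mono (inter_subset_inter_left _ hF_range)) hb
  obtain ⟨C, hC⟩ := exists_surfaceDensity_le E a
  have hmean : ∫ w, Real.log (r (w 0))⁻¹ ∂(Measure.infinitePi fun _ : ℕ => P) =
      ∑ i, P.real {i} * Real.log (r i)⁻¹ :=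
    integral_comp_eval_zero_infinitePi P fun i => Real.log (r i)⁻¹
  have hmean_pos := sum_measureReal_mul_log_inv_pos P hP hr
  have hρ_meas : Measurable fun w : ℕ → ι => r (w 0) :=
    (measurable_of_countable r).comp (measurable_pi_apply 0)
  have hwindow : ∀ w, infDist (π w) (S (w 0) '' J)ᶜ / b =
      r (w 0) * (infDist (π (shift w)) Jᶜ / b) := fun w => by
    rw [hπ.infDist_compl_image hr₀ hS, mul_div_assoc]
  simp only [hwindow, ← hmean] at hmean_pos ⊢
  exact ae_tendsto_inv_log_inv_mul_logIntegral (ergodic_shift P) hρ_meas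
    (fun w => hr₀ (w 0)) (.of_integral_ne_zero hmean_pos.ne') hmean_pos
    (((continuous_infDist_pt Jᶜ).comp hπ_cont).div_const b).measurable hh₀ hh_int
    (hπ.mul_infDist_compl_div_le hr₀ hS hJ_univ hJ_maps hb.le)
    ((measurable_surfaceDensity F a).comp
      (measurable_snd.prodMk (hπ_cont.measurable.comp measurable_fst)))
    (fun w ε hε => surfaceDensity_nonneg F a hε.le (π w)) (fun w ε hε => hC F ε (π w) hε)
    fun w ε hε hεw => hπ.surfaceDensity_eq hr₀ hS hF_self hFJ hJ_disj hab hb hε hεw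

end SelfSimilarSets

/-- (Local surface content density.) Under the SOSC with respect
to `J`, with `a > 1`, `ε₀ > 0` and `b := max(2a, diam(J)/ε₀)`, for `ν`-almost every
code `w` (with `x = π(w)`) the logarithmic Cesàro averages
`(1/ln(1/δ)) ∫_δ^{d(x,ℝ^d∖J)/b} ε^{-(d-1)} H^{d-1}(∂F(ε) ∩ B(x,aε)) ε⁻¹ dε` converge,
as `δ → 0⁺`, to the constant
`(∑_j r_j^D ln(1/r_j))⁻¹ ∫_W ∫_{d(π v,ℝ^d∖S_{v₁}J)/b}^{d(π v,ℝ^d∖J)/b}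
ε^{-(d-1)} H^{d-1}(∂F(ε) ∩ B(π v, aε)) ε⁻¹ dε dν(v)`, where `∂F(ε)` is the
topological boundary of the parallel set. -/
theorem statement4 (d N : ℕ) (hd : 1 ≤ d) (hN : 2 ≤ N)
    (S : Fin N → EuclideanSpace ℝ (Fin d) → EuclideanSpace ℝ (Fin d))
    (r : Fin N → ℝ) (hr : ∀ i, r i ∈ Set.Ioo (0 : ℝ) 1)
    (hS : ∀ i x y, dist (S i x) (S i y) = r i * dist x y)
    (F : Set (EuclideanSpace ℝ (Fin d)))
    (hF_ne : F.Nonempty) (hF_cpt : IsCompact F)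
    (hF_self : F = ⋃ i, S i '' F)
    (D : ℝ) (hD : 0 < D) (hD_dim : ∑ i, r i ^ D = 1)
    (J : Set (EuclideanSpace ℝ (Fin d))) (hJ_cpt : IsCompact J)
    (hJ_reg : J = closure (interior J))
    (hJ_sub : ∀ i, S i '' J ⊆ J)
    (hJ_disj : ∀ i j, i ≠ j → Disjoint (S i '' interior J) (S j '' interior J))
    (hSOSC : (F ∩ interior J).Nonempty)
    (ν : Measure (ℕ → Fin N)) [IsProbabilityMeasure ν]
    (hν_cyl : ∀ (n : ℕ) (u : Fin n → Fin N),
      ν {w : ℕ → Fin N | ∀ i : Fin n, w i = u i} = ∏ i, ENNReal.ofReal (r (u i) ^ D))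
    (π : (ℕ → Fin N) → EuclideanSpace ℝ (Fin d))
    (hπ_mem : ∀ w, π w ∈ F)
    (hπ : ∀ w, π w = S (w 0) (π (fun n => w (n + 1))))
    (a ε₀ : ℝ) (ha : 1 < a) (hε₀ : 0 < ε₀)
    (b : ℝ) (hb : b = max (2 * a) (Metric.diam J / ε₀)) :
    ∀ᵐ w ∂ν,
      Tendsto (fun δ : ℝ => (Real.log δ⁻¹)⁻¹ *
          ∫ ε in Set.Ioc δ (Metric.infDist (π w) Jᶜ / b),
            ε ^ (-((d : ℝ) - 1)) *
              (μH[(d:ℝ) - 1] (frontier (Metric.cthickening ε F) ∩ Metric.closedBall (π w) (a * ε))).toReal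
              * ε⁻¹)
        (𝓝[>] 0)
        (𝓝 ((∑ j, r j ^ D * Real.log (r j)⁻¹)⁻¹ *
          ∫ v, (∫ ε in Set.Ioc (Metric.infDist (π v) ((S (v 0) '' J))ᶜ / b)
                  (Metric.infDist (π v) Jᶜ / b),
              ε ^ (-((d : ℝ) - 1)) *
                (μH[(d:ℝ) - 1] (frontier (Metric.cthickening ε F)
                  ∩ Metric.closedBall (π v) (a * ε))).toReal * ε⁻¹) ∂ν)) := by
  have : NeZero d := ⟨by omega⟩
  obtain ⟨P, hP_prob, hP, rfl⟩ :=
    exists_eq_infinitePi_of_prefix (p := fun i => ENNReal.ofReal (r i ^ D)) hν_cyl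
  have hP₀ : ∀ i, P {i} ≠ 0 := fun i => by
    rw [hP]
    exact (ENNReal.ofReal_pos.2 (Real.rpow_pos_of_pos (hr i).1 D)).ne'
  have hPr : ∀ i, P.real {i} = r i ^ D := fun i => by
    rw [measureReal_def, hP, ENNReal.toReal_ofReal (Real.rpow_nonneg (hr i).1.le D)]
  have hab : a + 1 < b := by linarith [hb ▸ le_max_left (2 * a) (diam J / ε₀)]
  simpa only [hPr, logIntegral, surfaceDensity, finrank_euclideanSpace_fin] using
    statement4_general P hP₀ hr hS hF_cpt hF_self hJ_cpt.ne_univ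
      (fun i => mapsTo_iff_image_subset.2 (hJ_sub i)) (fun i j => hJ_disj i j) hSOSC hπ hπ_mem
      hab (by linarith)
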